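/- Let K be a field such that either char(K) = 2 or K contains ℚ(√−7), and let G_48 ⊆ S_8 be the subgroup of order 1344 generated by σ_1 = (1,2)(3,4)(5,6)(7,8), σ_2 = (1,3)(2,4)(5,7)(6,8), θ = (2,3,7,4,5,6,8), κ = (1,5)(2,6)(3,7)(4,8), φ_1 = (2,3,4)(7,6,5), and φ_2 = (2,3)(7,6). Then the fixed field K(x_1,…,x_8)^{G_48} is K-rational. -/

import Mathlib

noncomputable section

/-- The rational function field `K(x_i : i ∈ I)` over `K`, realized as the fraction field
of the multivariate polynomial ring. -/
abbrev RFF (K : Type) [Field K] (I : Type) := FractionRing (MvPolynomial I K)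

/-- The image of the variable `x_i` in the rational function field `K(x_i : i ∈ I)`. -/
noncomputable def Xvar (K : Type) [Field K] (I : Type) (i : I) : RFF K I :=
  algebraMap (MvPolynomial I K) (RFF K I) (MvPolynomial.X i)

/-- Permutations of the variables as `K`-algebra automorphisms of the polynomial ring. -/
def renameHom (K : Type) [Field K] (I : Type) :
    Equiv.Perm I →* (MvPolynomial I K ≃ₐ[K] MvPolynomial I K) where
  toFun σ := MvPolynomial.renameEquiv K σ
  map_one' := MvPolynomial.renameEquiv_refl K
  map_mul' σ τ := (MvPolynomial.renameEquiv_trans K τ σ).symm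

/-- The action of permutations of the variables on `K(x_i : i ∈ I)` by `K`-automorphisms,
determined by `σ(x_i) = x_{σ(i)}`. -/
noncomputable def permHom (K : Type) [Field K] (I : Type) :
    Equiv.Perm I →* (RFF K I ≃ₐ[K] RFF K I) :=
  (IsFractionRing.fieldEquivOfAlgEquivHom K (RFF K I)).comp (renameHom K I)

/-- The fixed field `K(x_i : i ∈ I)^G` of a group `G` of permutations of the variables. -/
noncomputable def fixedSub (K : Type) [Field K] (I : Type) (G : Subgroup (Equiv.Perm I)) :
    IntermediateField K (RFF K I) :=
  IntermediateField.fixedField (G.map (permHom K I))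

/-- An extension `L/K` is `K`-rational if it is purely transcendental over `K`, i.e. generated
by finitely many algebraically independent elements. -/
def IsRatExt (K : Type) [Field K] (L : Type*) [Field L] [Algebra K L] : Prop :=
  ∃ (n : ℕ) (t : Fin n → L), AlgebraicIndependent K t ∧
    IntermediateField.adjoin K (Set.range t) = ⊤

open IntermediateField

section general
variable {K L : Type} [Field K] [Field L] [Algebra K L]
variable {Γ : Type} [Group Γ] [Fintype Γ]

/-- `F` is stable under the action. -/
def Stab (ρ : Γ →* (L ≃ₐ[K] L)) (F : IntermediateField K L) : Prop :=
  ∀ g, ∀ a ∈ F, ρ g a ∈ F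

/-- The action is faithful on `F`. -/
def Faith (ρ : Γ →* (L ≃ₐ[K] L)) (F : IntermediateField K L) : Prop :=
  ∀ g, (∀ a ∈ F, ρ g a = a) → g = 1

theorem delta_aux [DecidableEq Γ] (ρ : Γ →* (L ≃ₐ[K] L)) (F : IntermediateField K L)
    (hs : Stab ρ F) (hf : Faith ρ F) (S : Finset Γ) :
    ∃ (ι : Type) (_ : Fintype ι) (c d : ι → L), (∀ i, c i ∈ F) ∧ (∀ i, d i ∈ F) ∧
      ∑ i, d i * c i = 1 ∧ ∀ g ∈ S, g ≠ 1 → ∑ i, d i * ρ g (c i) = 0 := by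
  induction S using Finset.induction_on with
  | empty =>
    refine ⟨Unit, inferInstance, fun _ => 1, fun _ => 1, ?_, ?_, ?_, ?_⟩ <;> simp
  | insert τ S hτ ih =>
    by_cases h1 : τ = 1
    · obtain ⟨ι, _, c, d, hc, hd, h, h'⟩ := ih
      refine ⟨ι, inferInstance, c, d, hc, hd, h, ?_⟩
      intro g hg hg1
      rcases Finset.mem_insert.1 hg with rfl | hg
      · exact absurd h1 hg1
      · exact h' g hg hg1
    obtain ⟨ι, _, c, d, hc, hd, h, h'⟩ := ih
    obtain ⟨a, haF, ha⟩ : ∃ a ∈ F, ρ τ a ≠ a := by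
      by_contra hcon
      push Not at hcon
      exact h1 (hf τ hcon)
    have hne : a - ρ τ a ≠ 0 := sub_ne_zero.2 (Ne.symm ha)
    have key : ∀ g : Γ, ∑ i : ι ⊕ ι, (Sum.elim (fun i => d i / (a - ρ τ a))
        (fun i => - (d i * ρ τ a / (a - ρ τ a))) i) * ρ g (Sum.elim (fun i => c i * a) c i)
        = (∑ i, d i * ρ g (c i)) * ((ρ g a - ρ τ a) / (a - ρ τ a)) := by
      intro g
      rw [Fintype.sum_sum_type, Finset.sum_mul, ← Finset.sum_add_distrib]
      apply Finset.sum_congr rfl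
      intro i _
      simp only [Sum.elim_inl, Sum.elim_inr, map_mul]
      field_simp
      ring
    refine ⟨ι ⊕ ι, inferInstance, Sum.elim (fun i => c i * a) c,
      Sum.elim (fun i => d i / (a - ρ τ a)) (fun i => - (d i * ρ τ a / (a - ρ τ a))),
      ?_, ?_, ?_, ?_⟩
    · rintro (i | i)
      · exact F.mul_mem (hc i) haF
      · exact hc i
    · rintro (i | i)
      · exact F.div_mem (hd i) (F.sub_mem haF (hs τ a haF))
      · exact F.neg_mem (F.div_mem (F.mul_mem (hd i) (hs τ a haF)) (F.sub_mem haF (hs τ a haF)))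
    · have := key 1
      simp only [map_one, AlgEquiv.one_apply] at this
      rw [this, h, div_self hne, one_mul]
    · intro g hg hg1
      rw [key g]
      rcases Finset.mem_insert.1 hg with rfl | hg
      · simp
      · rw [h' g hg hg1, zero_mul]

theorem delta (ρ : Γ →* (L ≃ₐ[K] L)) (F : IntermediateField K L)
    (hs : Stab ρ F) (hf : Faith ρ F) :
    ∃ (ι : Type) (_ : Fintype ι) (c d : ι → L), (∀ i, c i ∈ F) ∧ (∀ i, d i ∈ F) ∧
      ∑ i, d i * c i = 1 ∧ ∀ g, g ≠ 1 → ∑ i, d i * ρ g (c i) = 0 := by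
  classical
  obtain ⟨ι, _, c, d, hc, hd, h, h'⟩ := delta_aux ρ F hs hf Finset.univ
  exact ⟨ι, inferInstance, c, d, hc, hd, h, fun g hg => h' g (Finset.mem_univ _) hg⟩

/-- trace -/
def Tr (ρ : Γ →* (L ≃ₐ[K] L)) (l : L) : L := ∑ g, ρ g l

theorem Tr_fixed (ρ : Γ →* (L ≃ₐ[K] L)) (l : L) (h : Γ) : ρ h (Tr ρ l) = Tr ρ l := by
  unfold Tr
  rw [map_sum]
  refine Fintype.sum_equiv (Equiv.mulLeft h) _ _ ?_
  intro g
  simp [map_mul]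

theorem Tr_add (ρ : Γ →* (L ≃ₐ[K] L)) (l l' : L) : Tr ρ (l + l') = Tr ρ l + Tr ρ l' := by
  simp [Tr, Finset.sum_add_distrib]

theorem Tr_sum (ρ : Γ →* (L ≃ₐ[K] L)) {ι : Type} (s : Finset ι) (f : ι → L) :
    Tr ρ (∑ i ∈ s, f i) = ∑ i ∈ s, Tr ρ (f i) := by
  simp only [Tr, map_sum]
  exact Finset.sum_comm

theorem Tr_mul_fixed (ρ : Γ →* (L ≃ₐ[K] L)) (b l : L) (hb : ∀ g, ρ g b = b) :
    Tr ρ (b * l) = b * Tr ρ l := by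
  simp [Tr, Finset.mul_sum, hb]

theorem Tr_smul (ρ : Γ →* (L ≃ₐ[K] L)) (h : Γ) (l : L) : Tr ρ (ρ h l) = Tr ρ l := by
  unfold Tr
  refine Fintype.sum_equiv (Equiv.mulRight h) _ _ ?_
  intro g
  simp [map_mul]

theorem Tr_mem (ρ : Γ →* (L ≃ₐ[K] L)) (F : IntermediateField K L)
    (hs : Stab ρ F) {a : L} (ha : a ∈ F) : Tr ρ a ∈ F :=
  F.sum_mem (fun g _ => hs g a ha)

theorem delta_expand (ρ : Γ →* (L ≃ₐ[K] L)) {ι : Type} [Fintype ι] {c d : ι → L}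
    (h : ∑ i, d i * c i = 1) (h' : ∀ g, g ≠ 1 → ∑ i, d i * ρ g (c i) = 0) (l : L) :
    ∑ i, d i * Tr ρ (c i * l) = l := by
  unfold Tr
  simp only [Finset.mul_sum, map_mul]
  rw [Finset.sum_comm, Finset.sum_eq_single 1]
  · simp only [map_one, AlgEquiv.one_apply, ← mul_assoc]
    rw [← Finset.sum_mul, h, one_mul]
  · intro g _ hg
    simp only [← mul_assoc]
    rw [← Finset.sum_mul, h' g hg, zero_mul]
  · simp

/-- No-name lemma. -/
theorem noname (ρ : Γ →* (L ≃ₐ[K] L)) (F : IntermediateField K L)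
    (hs : Stab ρ F) (hf : Faith ρ F) (S : Set L) (hS : ∀ t ∈ S, ∀ g, ρ g t = t)
    (l : L) (hl : l ∈ F ⊔ adjoin K S) (hfix : ∀ g, ρ g l = l) :
    l ∈ adjoin K ({a | a ∈ F ∧ ∀ g, ρ g a = a} ∪ S) := by
  classical
  obtain ⟨ι, _, c, d, hc, hd, h, h'⟩ := delta ρ F hs hf
  set B := adjoin K ({a | a ∈ F ∧ ∀ g, ρ g a = a} ∪ S) with hB
  have hBfix : ∀ b ∈ B, ∀ g, ρ g b = b := by
    intro b hb g
    have : B ≤ fixedField (Subgroup.zpowers (ρ g)) := by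
      rw [hB, adjoin_le_iff]
      rintro x (hx | hx) ⟨k, hk⟩
      · rw [Subgroup.mem_zpowers_iff] at hk
        obtain ⟨n, rfl⟩ := hk
        change (ρ g ^ n) x = x
        rw [← map_zpow]; exact hx.2 _
      · rw [Subgroup.mem_zpowers_iff] at hk
        obtain ⟨n, rfl⟩ := hk
        change (ρ g ^ n) x = x
        rw [← map_zpow]; exact hS x hx _
    exact this hb ⟨ρ g, Subgroup.mem_zpowers _⟩
  have hTrF : ∀ a ∈ F, Tr ρ a ∈ B := fun a ha =>
    subset_adjoin K _ (Or.inl ⟨Tr_mem ρ F hs ha, Tr_fixed ρ a⟩)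
  obtain ⟨e, heF, he⟩ : ∃ e ∈ F, Tr ρ e ≠ 0 := by
    by_contra hcon
    push Not at hcon
    have := delta_expand ρ h h' 1
    rw [Finset.sum_eq_zero] at this
    · exact zero_ne_one this
    · intro i _
      rw [hcon _ (F.mul_mem (hc i) F.one_mem), mul_zero]
  have hdesc : ∀ x, (∀ g, ρ g x = x) → (∀ a ∈ F, Tr ρ (a * x) ∈ B) → x ∈ B := by
    intro x hx hT
    have h1 := hT e heF
    rw [mul_comm, Tr_mul_fixed ρ x e hx] at h1
    have := B.div_mem h1 (hTrF e heF)
    rwa [mul_div_cancel_right₀ _ he] at this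
  have hmul : ∀ x y, (∀ a ∈ F, Tr ρ (a * x) ∈ B) → (∀ a ∈ F, Tr ρ (a * y) ∈ B) →
      (∀ a ∈ F, Tr ρ (a * (x * y)) ∈ B) := by
    intro x y hx hy a ha
    have e1 : a * (x * y) = ∑ i, ∑ j, (Tr ρ (c i * x) * Tr ρ (c j * y)) * (a * d i * d j) := by
      conv_lhs => rw [← delta_expand ρ h h' x, ← delta_expand ρ h h' y]
      rw [Finset.sum_mul_sum, Finset.mul_sum]
      refine Finset.sum_congr rfl fun i _ => ?_
      rw [Finset.mul_sum]
      refine Finset.sum_congr rfl fun j _ => ?_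
      ring
    rw [e1, Tr_sum]
    refine B.sum_mem fun i _ => ?_
    rw [Tr_sum]
    refine B.sum_mem fun j _ => ?_
    have hm := B.mul_mem (hx _ (hc i)) (hy _ (hc j))
    rw [Tr_mul_fixed ρ _ _ (hBfix _ hm)]
    exact B.mul_mem hm (hTrF _ (F.mul_mem (F.mul_mem ha (hd i)) (hd j)))
  have hB' : ∀ b ∈ B, ∀ a ∈ F, Tr ρ (a * b) ∈ B := by
    intro b hb a ha
    rw [mul_comm, Tr_mul_fixed ρ _ _ (hBfix _ hb)]
    exact B.mul_mem hb (hTrF _ ha)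
  have hg : ∀ g x, (∀ a ∈ F, Tr ρ (a * x) ∈ B) → (∀ a ∈ F, Tr ρ (a * ρ g x) ∈ B) := by
    intro g x hx a ha
    have : a * ρ g x = ρ g (ρ g⁻¹ a * x) := by
      rw [map_mul, ← AlgEquiv.mul_apply, ← map_mul]; simp
    rw [this, Tr_smul]
    exact hx _ (hs _ _ ha)
  have hprod : ∀ x, (∀ a ∈ F, Tr ρ (a * x) ∈ B) → ∀ s : Finset Γ,
      (∀ a ∈ F, Tr ρ (a * ∏ g ∈ s, ρ g x) ∈ B) := by
    intro x hx s
    induction s using Finset.induction_on with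
    | empty => simpa using hTrF
    | insert g s hgs ih =>
      rw [Finset.prod_insert hgs]
      exact hmul _ _ (hg g x hx) ih
  let T : IntermediateField K L :=
    { carrier := {x | ∀ a ∈ F, Tr ρ (a * x) ∈ B}
      mul_mem' := fun {x y} hx hy => hmul x y hx hy
      one_mem' := hB' 1 B.one_mem
      add_mem' := fun {x y} hx hy a ha => by
        rw [mul_add, Tr_add]; exact B.add_mem (hx a ha) (hy a ha)
      zero_mem' := hB' 0 B.zero_mem
      algebraMap_mem' := fun k => hB' _ (B.algebraMap_mem k)
      inv_mem' := fun x hx => by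
        by_cases hx0 : x = 0
        · subst hx0; rw [inv_zero]; exact hB' 0 B.zero_mem
        have hN : (∏ g : Γ, ρ g x) ∈ B := by
          apply hdesc _ _ (hprod x hx _)
          intro h
          rw [map_prod]
          refine Fintype.prod_equiv (Equiv.mulLeft h) _ _ ?_
          intro g
          simp [map_mul]
        have hN0 : (∏ g : Γ, ρ g x) ≠ 0 := by
          rw [Finset.prod_ne_zero_iff]
          intro g _
          simpa using hx0
        have : x⁻¹ = (∏ g : Γ, ρ g x)⁻¹ * ∏ g ∈ Finset.univ.erase 1, ρ g x := by
          rw [← Finset.mul_prod_erase Finset.univ (fun g => ρ g x) (Finset.mem_univ 1)] at hN0 ⊢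
          simp only [map_one, AlgEquiv.one_apply] at hN0 ⊢
          have := right_ne_zero_of_mul hN0
          field_simp
        rw [this]
        exact hmul _ _ (hB' _ (B.inv_mem hN)) (hprod x hx _) }
  have hT : F ⊔ adjoin K S ≤ T := by
    refine sup_le ?_ ?_
    · intro x hx a ha
      exact hTrF _ (F.mul_mem ha hx)
    · rw [adjoin_le_iff]
      intro x hx
      exact hB' x (subset_adjoin K _ (Or.inr hx))
  exact hdesc l hfix (hT hl)

/-- `C` is spanned over `A` by a family indexed by `ι`. -/
def Spans (A C : IntermediateField K L) (ι : Type) [Fintype ι] : Prop :=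
  ∃ f : ι → L, ∀ x ∈ C, ∃ b : ι → L, (∀ i, b i ∈ A) ∧ x = ∑ i, b i * f i

theorem Spans.trans {A B C : IntermediateField K L} {ι κ : Type} [Fintype ι] [Fintype κ]
    (h1 : Spans A B ι) (h2 : Spans B C κ) : Spans A C (κ × ι) := by
  obtain ⟨f, hf⟩ := h1
  obtain ⟨e, he⟩ := h2
  refine ⟨fun p => f p.2 * e p.1, fun x hx => ?_⟩
  obtain ⟨b, hb, rfl⟩ := he x hx
  choose b' hb' hb'' using fun i => hf (b i) (hb i)
  refine ⟨fun p => b' p.1 p.2, fun p => hb' _ _, ?_⟩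
  rw [Fintype.sum_prod_type]
  refine Finset.sum_congr rfl fun i _ => ?_
  rw [hb'' i, Finset.sum_mul]
  refine Finset.sum_congr rfl fun j _ => ?_
  ring

end general

section general
variable {K L : Type} [Field K] [Field L] [Algebra K L]
variable {Γ : Type} [Group Γ] [Fintype Γ]

theorem Spans.step (A C : IntermediateField K L) (a : L) (d : ℕ) (c : Fin d → L)
    (hc : ∀ i, c i ∈ A) (ha : a ^ d = ∑ i, c i * a ^ (i : ℕ)) (hC : C ≤ A ⊔ adjoin K {a}) :
    Spans A C (Fin d) := by
  let h : Polynomial A := ∑ i, Polynomial.C (⟨c i, hc i⟩ : A) * Polynomial.X ^ (i : ℕ)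
  let f : Polynomial A := Polynomial.X ^ d - h
  have hdeg : h.degree < (d : WithBot ℕ) := by
    exact Polynomial.degree_sum_fin_lt _
  have hmon : f.Monic := Polynomial.monic_X_pow_sub hdeg
  have hfd : f.degree = d := by
    have := Polynomial.degree_sub_eq_left_of_degree_lt (p := (Polynomial.X ^ d : Polynomial A)) (q := h)
      (by rw [Polynomial.degree_X_pow]; exact hdeg)
    rw [Polynomial.degree_X_pow] at this
    exact this
  have hroot : Polynomial.aeval a f = 0 := by
    simp only [f, h, map_sub, map_pow, Polynomial.aeval_X, map_sum, map_mul, Polynomial.aeval_C]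
    rw [ha, sub_eq_zero]
    rfl
  have hint : IsIntegral A a := ⟨f, hmon, hroot⟩
  refine ⟨fun i => a ^ (i : ℕ), fun x hx => ?_⟩
  have hx' : x ∈ adjoin A {a} := by
    have h1 : A ⊔ adjoin K {a} ≤ (adjoin A {a}).restrictScalars K := by
      refine sup_le ?_ ?_
      · intro y hy
        exact (adjoin A {a}).algebraMap_mem ⟨y, hy⟩
      · rw [adjoin_le_iff]
        exact subset_adjoin A {a}
    exact h1 (hC hx)
  rw [← mem_toSubalgebra, adjoin_simple_toSubalgebra_of_isAlgebraic hint.isAlgebraic,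
    Algebra.adjoin_singleton_eq_range_aeval] at hx'
  obtain ⟨p, rfl⟩ := hx'
  change ∃ b : Fin d → L, (∀ i, b i ∈ A) ∧ Polynomial.aeval a p = _
  rw [← Polynomial.modByMonic_add_div p f, map_add, map_mul, hroot, zero_mul, add_zero]
  have hlt : (p %ₘ f).degree < (d : WithBot ℕ) := by
    rw [← hfd]; exact Polynomial.degree_modByMonic_lt p hmon
  refine ⟨fun i => ((p %ₘ f).coeff i : A), fun i => SetLike.coe_mem _, ?_⟩
  rw [Polynomial.aeval_def, Polynomial.eval₂_eq_sum, Polynomial.sum_over_range' _ (by simp) d]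
  · rw [Finset.sum_range]
    rfl
  · have hd : 0 < d := by
      rcases Nat.eq_zero_or_pos d with rfl | h0
      · simp at ha
      · exact h0
    by_cases h0 : p %ₘ f = 0
    · rw [h0]; simpa using hd
    · exact (Polynomial.natDegree_lt_iff_degree_lt h0).2 hlt

theorem artin (ρ : Γ →* (L ≃ₐ[K] L)) (F B : IntermediateField K L)
    (hs : Stab ρ F) (hf : Faith ρ F) (hB : ∀ b ∈ B, ∀ g, ρ g b = b)
    {ι : Type} [Fintype ι] (hsp : Spans B F ι) (hcard : Fintype.card ι ≤ Fintype.card Γ)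
    (x : L) (hx : x ∈ F) (hfix : ∀ g, ρ g x = x) : x ∈ B := by
  classical
  obtain ⟨κ, _, c, d, hc, hd, h, h'⟩ := delta ρ F hs hf
  obtain ⟨f, hfs⟩ := hsp
  let v : ι → (Γ → L) := fun i g => ρ g (f i)
  have hv : ∀ y ∈ F, (fun g => ρ g y) ∈ Submodule.span L (Set.range v) := by
    intro y hy
    obtain ⟨b, hb, rfl⟩ := hfs y hy
    have : (fun g => ρ g (∑ i, b i * f i)) = ∑ i, b i • v i := by
      ext g
      simp [v, hB _ (hb _)]
    rw [this]
    exact Submodule.sum_mem _ fun i _ => Submodule.smul_mem _ _ (Submodule.subset_span ⟨i, rfl⟩)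
  have htop : ⊤ ≤ Submodule.span L (Set.range v) := by
    intro w _
    have hw : w = ∑ k, w k • ∑ i, ρ k (d i) • (fun g => ρ g (c i)) := by
      ext g
      simp only [Finset.sum_apply, Pi.smul_apply, smul_eq_mul]
      rw [Finset.sum_eq_single g]
      · simp only [← map_mul, ← map_sum, h, map_one, mul_one]
      · intro k _ hk
        have : ∑ i, ρ k (d i) * ρ g (c i) = ρ k (∑ i, d i * ρ (k⁻¹ * g) (c i)) := by
          rw [map_sum]
          refine Finset.sum_congr rfl fun i _ => ?_
          rw [map_mul, ← AlgEquiv.mul_apply, ← map_mul, mul_inv_cancel_left]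
        rw [this, h' _ (fun hh => hk (inv_mul_eq_one.1 hh)), map_zero, mul_zero]
      · simp
    rw [hw]
    refine Submodule.sum_mem _ fun k _ => Submodule.smul_mem _ _ ?_
    exact Submodule.sum_mem _ fun i _ => Submodule.smul_mem _ _ (hv _ (hc i))
  have hli : LinearIndependent L v := by
    apply linearIndependent_of_top_le_span_of_card_eq_finrank htop
    apply le_antisymm
    · simpa using hcard
    · rw [← finrank_top L (Γ → L), ← top_le_iff.1 htop]
      exact finrank_range_le_card v
  have hne : Nonempty ι := by
    rw [← Fintype.card_pos_iff]
    have h1 : Module.finrank L (Γ → L) ≤ Fintype.card ι := by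
      rw [← finrank_top L (Γ → L), ← top_le_iff.1 htop]
      exact finrank_range_le_card v
    rw [Module.finrank_fintype_fun_eq_card] at h1
    exact lt_of_lt_of_le Fintype.card_pos h1
  obtain ⟨i0⟩ := hne
  -- find element of F with nonzero coefficient
  obtain ⟨b, hb, hb1⟩ := hfs 1 F.one_mem
  obtain ⟨b', hb', hb1'⟩ := hfs x hx
  have e1 : ∑ i, (x * b i - b' i) • v i = 0 := by
    ext g
    have := congrArg (ρ g) hb1'
    have h2 := congrArg (ρ g) hb1
    simp only [map_sum, map_mul, hB _ (hb _), hB _ (hb' _), hfix, map_one] at this h2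
    simp only [Finset.sum_apply, Pi.smul_apply, smul_eq_mul, sub_mul, Finset.sum_sub_distrib, v,
      Pi.zero_apply, mul_assoc]
    rw [← Finset.mul_sum, ← h2, ← this]; ring
  have e2 := Fintype.linearIndependent_iff.1 hli _ e1
  obtain ⟨j, hj⟩ : ∃ j, b j ≠ 0 := by
    by_contra hcon
    push Not at hcon
    simp [hcon] at hb1
  have := B.div_mem (hb' j) (hb j)
  rwa [← sub_eq_zero.1 (e2 j), mul_div_cancel_right₀ _ hj] at this

end general

section general
variable {K L : Type} [Field K] [Field L] [Algebra K L]
variable {Γ : Type} [Group Γ] [Fintype Γ]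

theorem exists_invariants (ρ : Γ →* (L ≃ₐ[K] L)) (F : IntermediateField K L)
    (hs : Stab ρ F) (hf : Faith ρ F) {ι : Type} [Fintype ι] (w : ι → L) (n : ℕ)
    (hn : Fintype.card ι ≤ n + 1)
    (hw : ∀ g i, ρ g (w i) ∈ Submodule.span F (Set.range w))
    (h1 : (1 : L) ∈ Submodule.span F (Set.range w)) :
    ∃ S : Finset L, S.card ≤ n ∧ (∀ t ∈ S, ∀ g, ρ g t = t) ∧
      (∀ t ∈ S, t ∈ F ⊔ adjoin K (Set.range w)) ∧
      (∀ i, w i ∈ F ⊔ adjoin K (S : Set L)) := by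
  classical
  obtain ⟨κ, _, c, d, hc, hd, h, h'⟩ := delta ρ F hs hf
  set W := Submodule.span F (Set.range w) with hW
  have hWs : ∀ g, ∀ l ∈ W, ρ g l ∈ W := by
    intro g l hl
    induction hl using Submodule.span_induction with
    | mem x hx => obtain ⟨i, rfl⟩ := hx; exact hw g i
    | zero => rw [map_zero]; exact W.zero_mem
    | add x y _ _ hx hy => rw [map_add]; exact W.add_mem hx hy
    | smul a x _ hx =>
      rw [Algebra.smul_def, map_mul]
      exact W.smul_mem (⟨_, hs g _ a.2⟩ : F) hx
  let T : Set L := {x | x ∈ W ∧ ∀ g, ρ g x = x}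
  have hli : LinearIndepOn F id ({1} : Set L) := LinearIndepOn.singleton one_ne_zero
  obtain ⟨b, hbT, h1b, hTb, hb⟩ := exists_linearIndepOn_id_extension hli
    (t := T) (by rintro x rfl; exact ⟨h1, by simp⟩)
  have hWT : W ≤ Submodule.span F b := by
    intro l hl
    rw [← delta_expand ρ h h' l]
    refine Submodule.sum_mem _ fun i _ => ?_
    refine Submodule.smul_mem _ (⟨d i, hd i⟩ : F) (hTb ⟨?_, Tr_fixed ρ _⟩)
    exact W.sum_mem fun g _ => hWs g _ (W.smul_mem (⟨c i, hc i⟩ : F) hl)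
  have hbW : Submodule.span F b ≤ W := Submodule.span_le.2 fun x hx => (hbT hx).1
  have hWfin : FiniteDimensional F W := FiniteDimensional.span_of_finite F (Set.finite_range w)
  have hb' : LinearIndependent F (fun x : b => (⟨x.1, (hbT x.2).1⟩ : W)) := by
    apply LinearIndependent.of_comp W.subtype
    exact hb
  have hbfin : Finite b := hb'.finite
  have := Fintype.ofFinite b
  have hcard : Fintype.card b ≤ n + 1 :=
    (hb'.fintype_card_le_finrank.trans (finrank_range_le_card w)).trans hn
  refine ⟨b.toFinset.erase 1, ?_, ?_, ?_, ?_⟩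
  · rw [Finset.card_erase_of_mem (by simpa using h1b), Set.toFinset_card]
    omega
  · intro t ht g
    exact (hbT (Set.mem_toFinset.1 (Finset.mem_of_mem_erase ht))).2 g
  · intro t ht
    have := (hbT (Set.mem_toFinset.1 (Finset.mem_of_mem_erase ht))).1
    rw [hW] at this
    clear ht
    induction this using Submodule.span_induction with
    | mem x hx => exact (le_sup_right : _ ≤ F ⊔ adjoin K (Set.range w)) (subset_adjoin K _ hx)
    | zero => exact zero_mem _
    | add x y _ _ hx hy => exact add_mem hx hy
    | smul a x _ hx =>
      rw [Algebra.smul_def]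
      exact mul_mem ((le_sup_left : F ≤ _) a.2) hx
  · intro i
    have := hWT (Submodule.subset_span ⟨i, rfl⟩ : w i ∈ W)
    generalize w i = y at this ⊢
    induction this using Submodule.span_induction with
    | mem x hx =>
      by_cases hx1 : x = 1
      · rw [hx1]; exact one_mem _
      · refine (le_sup_right : _ ≤ F ⊔ _) (subset_adjoin K _ ?_)
        simp [hx1, hx]
    | zero => exact zero_mem _
    | add x y _ _ hx hy => exact add_mem hx hy
    | smul a x _ hx =>
      rw [Algebra.smul_def]
      exact mul_mem ((le_sup_left : F ≤ _) a.2) hx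

end general

section trdeg
variable {K : Type} [Field K]

theorem trdeg_RFF : Algebra.trdeg K (RFF K (Fin 8)) = 8 := by
  have : Algebra.IsAlgebraic (MvPolynomial (Fin 8) K) (RFF K (Fin 8)) :=
    IsLocalization.isAlgebraic _ (nonZeroDivisors (MvPolynomial (Fin 8) K))
  have h := (IsTranscendenceBasis.mvPolynomial (Fin 8) K).algebraMap_comp (A := RFF K (Fin 8))
  have := h.cardinalMk_eq_trdeg
  simpa using this.symm

open scoped IntermediateField.algebraAdjoinAdjoin in
theorem algIndep_of_alg {n : ℕ} (hn : n ≤ 8) (t : Fin n → RFF K (Fin 8))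
    (h : Algebra.IsAlgebraic (adjoin K (Set.range t)) (RFF K (Fin 8))) :
    AlgebraicIndependent K t := by
  have : Algebra.IsAlgebraic (Algebra.adjoin K (Set.range t)) (RFF K (Fin 8)) := by
    exact (IsFractionRing.comap_isAlgebraic_iff (K := adjoin K (Set.range t))).2 h
  refine (Algebra.IsAlgebraic.isTranscendenceBasis_of_le_trdeg_of_finite K t ?_).1
  rw [trdeg_RFF]
  simpa using hn

theorem final (E : IntermediateField K (RFF K (Fin 8))) (S : Finset (RFF K (Fin 8)))
    (hS : S.card ≤ 8) (hE : adjoin K (S : Set (RFF K (Fin 8))) = E)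
    (h : Algebra.IsAlgebraic E (RFF K (Fin 8))) : IsRatExt K E := by
  have hr : Set.range (fun i => (S.equivFin.symm i : RFF K (Fin 8))) = S := by
    rw [← Function.comp_def, Set.range_comp]
    simp
  have hi : AlgebraicIndependent K (fun i => (S.equivFin.symm i : RFF K (Fin 8))) := by
    apply algIndep_of_alg hS
    rw [hr, hE]
    exact h
  have hm : ∀ i, (S.equivFin.symm i : RFF K (Fin 8)) ∈ E := by
    intro i
    rw [← hE]
    exact subset_adjoin K _ (S.equivFin.symm i).2
  refine ⟨S.card, fun i => ⟨_, hm i⟩, ?_, ?_⟩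
  · have := hi
    rw [show (fun i => (S.equivFin.symm i : RFF K (Fin 8))) = E.val ∘ (fun i => ⟨_, hm i⟩) from rfl] at this
    exact AlgebraicIndependent.of_comp _ this
  · apply IntermediateField.map_injective E.val
    rw [IntermediateField.adjoin_map, ← Set.range_comp]
    change adjoin K (Set.range (fun i => (S.equivFin.symm i : RFF K (Fin 8)))) = _
    rw [hr, hE]
    simp [← AlgHom.fieldRange_eq_map]

theorem alg_fixed (G : Subgroup (Equiv.Perm (Fin 8))) :
    Algebra.IsAlgebraic (fixedSub K (Fin 8) G) (RFF K (Fin 8)) := by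
  have : Finite (G.map (permHom K (Fin 8))) := by
    have : Finite G := inferInstance
    exact Finite.of_surjective _ ((permHom K (Fin 8)).subgroupMap_surjective G)
  refine ⟨fun x => IsIntegral.isAlgebraic ?_⟩
  exact FixedPoints.isIntegral (G.map (permHom K (Fin 8))) (RFF K (Fin 8)) x

end trdeg


def pS1 : Equiv.Perm (Fin 8) :=
  Equiv.swap (0 : Fin 8) 1 * Equiv.swap 2 3 * Equiv.swap 4 5 * Equiv.swap 6 7
def pS2 : Equiv.Perm (Fin 8) :=
  Equiv.swap (0 : Fin 8) 2 * Equiv.swap 1 3 * Equiv.swap 4 6 * Equiv.swap 5 7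
def pTh : Equiv.Perm (Fin 8) :=
  Equiv.swap (1 : Fin 8) 2 * Equiv.swap 2 6 * Equiv.swap 6 3 * Equiv.swap 3 4 * Equiv.swap 4 5 * Equiv.swap 5 7
def pK : Equiv.Perm (Fin 8) :=
  Equiv.swap (0 : Fin 8) 4 * Equiv.swap 1 5 * Equiv.swap 2 6 * Equiv.swap 3 7
def pF1 : Equiv.Perm (Fin 8) :=
  (Equiv.swap (1 : Fin 8) 2 * Equiv.swap 2 3) * (Equiv.swap (6 : Fin 8) 5 * Equiv.swap 5 4)
def pF2 : Equiv.Perm (Fin 8) := Equiv.swap (1 : Fin 8) 2 * Equiv.swap 5 6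

def G48 : Subgroup (Equiv.Perm (Fin 8)) := Subgroup.closure {pS1, pS2, pTh, pK, pF1, pF2}
def HH : Subgroup (Equiv.Perm (Fin 8)) := Subgroup.closure {pTh, pF1, pF2}
def VV : Subgroup (Equiv.Perm (Fin 8)) := Subgroup.closure {pS1, pS2, pK}

theorem HH_le : HH ≤ G48 := Subgroup.closure_mono (by
  intro x hx; simp only [Set.mem_insert_iff, Set.mem_singleton_iff] at hx ⊢; tauto)
theorem VV_le : VV ≤ G48 := Subgroup.closure_mono (by
  intro x hx; simp only [Set.mem_insert_iff, Set.mem_singleton_iff] at hx ⊢; tauto)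

theorem pTh_mem : pTh ∈ HH := Subgroup.subset_closure (by simp)
theorem pF1_mem : pF1 ∈ HH := Subgroup.subset_closure (by simp)
theorem pF2_mem : pF2 ∈ HH := Subgroup.subset_closure (by simp)
theorem pS1_mem : pS1 ∈ VV := Subgroup.subset_closure (by simp)
theorem pS2_mem : pS2 ∈ VV := Subgroup.subset_closure (by simp)
theorem pK_mem : pK ∈ VV := Subgroup.subset_closure (by simp)

def hEl (q : Fin 7 × Fin 4 × Fin 3 × Fin 2) : Equiv.Perm (Fin 8) :=
  pTh ^ (q.1 : ℕ) * (pTh * pF2 * pTh) ^ (q.2.1 : ℕ) * (pF1 ^ (q.2.2.1 : ℕ) * pF2 ^ (q.2.2.2 : ℕ))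

theorem hEl_mem (q) : hEl q ∈ HH := by
  unfold hEl
  have := pTh_mem; have := pF1_mem; have := pF2_mem
  exact mul_mem (mul_mem (pow_mem pTh_mem _) (pow_mem (mul_mem (mul_mem pTh_mem pF2_mem) pTh_mem) _))
    (mul_mem (pow_mem pF1_mem _) (pow_mem pF2_mem _))

def hKey (g : Equiv.Perm (Fin 8)) : ℕ := (g 1 : ℕ) + 8 * (g 2 : ℕ) + 64 * (g 4 : ℕ)

theorem card_keys : (Finset.univ.image (fun q => hKey (hEl q))).card = 168 := by
  decide +kernel

instance : Fintype HH := Fintype.ofFinite _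
instance : Fintype VV := Fintype.ofFinite _
instance : Fintype G48 := Fintype.ofFinite _

theorem card_HH : 168 ≤ Fintype.card HH := by
  classical
  rw [← card_keys, ← Finset.card_univ]
  refine le_trans (Finset.card_le_card ?_)
    (Finset.card_image_le (f := fun g : HH => hKey g))
  intro x hx
  rw [Finset.mem_image] at hx ⊢
  obtain ⟨q, _, rfl⟩ := hx
  exact ⟨⟨hEl q, hEl_mem q⟩, Finset.mem_univ _, rfl⟩

def vEl (i : Fin 8) : Equiv.Perm (Fin 8) :=
  pS1 ^ ((i : ℕ) % 2) * pS2 ^ ((i : ℕ) / 2 % 2) * pK ^ ((i : ℕ) / 4)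

theorem vEl_mem (q) : vEl q ∈ VV :=
  mul_mem (mul_mem (pow_mem pS1_mem _) (pow_mem pS2_mem _)) (pow_mem pK_mem _)

theorem vEl_zero : ∀ i, vEl i 0 = i := by decide +kernel

theorem HH_zero (g) (hg : g ∈ HH) : g 0 = 0 := by
  unfold HH at hg
  induction hg using Subgroup.closure_induction with
  | mem x hx =>
    simp only [Set.mem_insert_iff, Set.mem_singleton_iff] at hx
    rcases hx with rfl | rfl | rfl <;> decide +kernel
  | one => rfl
  | mul x y _ _ hx hy => rw [Equiv.Perm.mul_apply, hy, hx]
  | inv x _ hx => rw [Equiv.Perm.inv_eq_iff_eq, hx]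

theorem card_VV : 8 ≤ Fintype.card VV := by
  have : Function.Injective (fun i => (⟨vEl i, vEl_mem i⟩ : VV)) := by
    intro i j h
    have h2 := congrArg (fun g : VV => (g : Equiv.Perm (Fin 8)) 0) h
    simpa [vEl_zero] using h2
  simpa using Fintype.card_le_of_injective _ this

theorem card_G48 : 1344 ≤ Fintype.card G48 := by
  have : Function.Injective (fun q : Fin 8 × HH =>
      (⟨vEl q.1 * q.2, mul_mem (VV_le (vEl_mem q.1)) (HH_le q.2.2)⟩ : G48)) := by
    rintro ⟨i, g⟩ ⟨j, h⟩ hh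
    have h1 := congrArg (fun g : G48 => (g : Equiv.Perm (Fin 8))) hh
    simp only at h1
    have h2 := congrArg (fun g : Equiv.Perm (Fin 8) => g 0) h1
    simp only [Equiv.Perm.mul_apply, HH_zero _ g.2, HH_zero _ h.2, vEl_zero] at h2
    subst h2
    rw [mul_right_inj] at h1
    rw [Subtype.ext h1]
  have h3 := Fintype.card_le_of_injective _ this
  have := card_HH
  simp only [Fintype.card_prod, Fintype.card_fin] at h3
  omega

section act
variable (K : Type) [Field K]

theorem permHom_X (σ : Equiv.Perm (Fin 8)) (i : Fin 8) :
    permHom K (Fin 8) σ (Xvar K (Fin 8) i) = Xvar K (Fin 8) (σ i) := by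
  simp [permHom, Xvar, renameHom]

/-- action of a subgroup -/
def act (G : Subgroup (Equiv.Perm (Fin 8))) : G →* (RFF K (Fin 8) ≃ₐ[K] RFF K (Fin 8)) :=
  (permHom K (Fin 8)).comp G.subtype

theorem act_X (G : Subgroup (Equiv.Perm (Fin 8))) (g : G) (i : Fin 8) :
    act K G g (Xvar K (Fin 8) i) = Xvar K (Fin 8) ((g : Equiv.Perm (Fin 8)) i) := permHom_X K g i

theorem mem_fixedSub (G : Subgroup (Equiv.Perm (Fin 8))) (x : RFF K (Fin 8)) :
    x ∈ fixedSub K (Fin 8) G ↔ ∀ g, act K G g x = x := by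
  unfold fixedSub
  rw [IntermediateField.mem_fixedField_iff]
  constructor
  · intro h g
    exact h _ ⟨g, g.2, rfl⟩
  · rintro h _ ⟨g, hg, rfl⟩
    exact h ⟨g, hg⟩

theorem adjoin_X : adjoin K (Set.range (Xvar K (Fin 8))) = ⊤ := by
  rw [eq_top_iff]
  intro x _
  obtain ⟨a, b, hb, rfl⟩ := IsFractionRing.div_surjective (A := MvPolynomial (Fin 8) K) x
  have : ∀ p : MvPolynomial (Fin 8) K, algebraMap _ (RFF K (Fin 8)) p ∈
      adjoin K (Set.range (Xvar K (Fin 8))) := by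
    intro p
    induction p using MvPolynomial.induction_on with
    | C a => exact (adjoin K (Set.range (Xvar K (Fin 8)))).algebraMap_mem a
    | add p q hp hq => rw [map_add]; exact add_mem hp hq
    | mul_X p i hp => rw [map_mul]; exact mul_mem hp (subset_adjoin K _ ⟨i, rfl⟩)
  exact div_mem (this a) (this b)

theorem algIndep_X : AlgebraicIndependent K (Xvar K (Fin 8)) := by
  have h := MvPolynomial.algebraicIndependent_X (Fin 8) K
  exact h.map' (f := IsScalarTower.toAlgHom K (MvPolynomial (Fin 8) K) (RFF K (Fin 8)))
    (IsFractionRing.injective _ _)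

theorem X_inj : Function.Injective (Xvar K (Fin 8)) := (algIndep_X K).injective

end act


theorem closure_ind_fin {S : Set (Equiv.Perm (Fin 8))} {P : Equiv.Perm (Fin 8) → Prop}
    (h1 : P 1) (hm : ∀ x y, P x → P y → P (x * y)) (hS : ∀ x ∈ S, P x)
    (g : Equiv.Perm (Fin 8)) (hg : g ∈ Subgroup.closure S) : P g := by
  rw [← Subgroup.mem_toSubmonoid, Subgroup.closure_toSubmonoid_of_finite] at hg
  induction hg using Submonoid.closure_induction with
  | mem x hx => exact hS x hx
  | one => exact h1
  | mul x y _ _ hx hy => exact hm x y hx hy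

theorem fix_closure (K : Type) [Field K] {S : Set (Equiv.Perm (Fin 8))} (x : RFF K (Fin 8))
    (hS : ∀ g ∈ S, permHom K (Fin 8) g x = x) (g : Subgroup.closure S) :
    act K (Subgroup.closure S) g x = x := by
  obtain ⟨g, hg⟩ := g
  change permHom K (Fin 8) g x = x
  refine closure_ind_fin (P := fun g => permHom K (Fin 8) g x = x) ?_ ?_ hS g hg
  · simp
  · intro a b ha hb
    rw [map_mul, AlgEquiv.mul_apply, hb, ha]

theorem map_adjoin_mem {K L : Type} [Field K] [Field L] [Algebra K L] (f : L ≃ₐ[K] L)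
    (T : Set L) (F : IntermediateField K L) (h : ∀ t ∈ T, f t ∈ F) :
    ∀ a ∈ adjoin K T, f a ∈ F := by
  have : adjoin K T ≤ F.comap f.toAlgHom := by
    rw [adjoin_le_iff]
    exact h
  exact fun a ha => this ha

theorem stab_closure (K : Type) [Field K] {S : Set (Equiv.Perm (Fin 8))} (T : Set (RFF K (Fin 8)))
    (hS : ∀ g ∈ S, ∀ t ∈ T, permHom K (Fin 8) g t ∈ adjoin K T) :
    Stab (act K (Subgroup.closure S)) (adjoin K T) := by
  rintro ⟨g, hg⟩
  change ∀ a ∈ adjoin K T, permHom K (Fin 8) g a ∈ adjoin K T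
  refine closure_ind_fin (P := fun g => ∀ a ∈ adjoin K T, permHom K (Fin 8) g a ∈ adjoin K T)
    ?_ ?_ ?_ g hg
  · simp
  · intro a b ha hb t ht
    rw [map_mul, AlgEquiv.mul_apply]
    exact ha _ (hb _ ht)
  · intro g hg
    exact map_adjoin_mem _ _ _ (hS g hg)

theorem sum_X_inj (K : Type) [Field K] (A B : Finset (Fin 8))
    (h : ∑ i ∈ A, Xvar K (Fin 8) i = ∑ i ∈ B, Xvar K (Fin 8) i) : A = B := by
  have hl := (algIndep_X K).linearIndependent
  rw [Fintype.linearIndependent_iff] at hl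
  have := hl (fun i => (if i ∈ A then 1 else 0) - (if i ∈ B then 1 else 0)) (by
    simp only [sub_smul, Finset.sum_sub_distrib, ite_smul, one_smul, zero_smul]
    rw [Finset.sum_ite_mem, Finset.sum_ite_mem]
    simp [h])
  ext i
  have := this i
  by_cases h1 : i ∈ A <;> by_cases h2 : i ∈ B <;> simp_all

section dickson
variable {R : Type} [CommRing R]
def dE (n1 n2 : R) : R := n2 ^ 2 + n1 * n2
def dF (n1 n2 n3 : R) : R :=
  n3 ^ 4 + (n1 ^ 2 + dE n1 n2) * n3 ^ 2 + dE n1 n2 * n1 * n3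
def d4 (n1 n2 n3 : R) : R := (n1 ^ 2 + dE n1 n2) ^ 2 + dF n1 n2 n3
def d6 (n1 n2 n3 : R) : R := dE n1 n2 ^ 2 * n1 ^ 2 + dF n1 n2 n3 * (n1 ^ 2 + dE n1 n2)
def d7 (n1 n2 n3 : R) : R := dF n1 n2 n3 * dE n1 n2 * n1

theorem d_swap [CharP R 2] (a b c : R) : d4 b a c = d4 a b c ∧ d6 b a c = d6 a b c ∧ d7 b a c = d7 a b c := by
  have h2 : (2 : R) = 0 := CharTwo.two_eq_zero
  unfold d4 d6 d7 dF dE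
  refine ⟨?_, ?_, ?_⟩ <;> grind
theorem d_add [CharP R 2] (a b c : R) : d4 a (a + b) c = d4 a b c ∧ d6 a (a + b) c = d6 a b c ∧ d7 a (a + b) c = d7 a b c := by
  have h2 : (2 : R) = 0 := CharTwo.two_eq_zero
  unfold d4 d6 d7 dF dE
  refine ⟨?_, ?_, ?_⟩ <;> grind
theorem d_rot [CharP R 2] (a b c : R) : d4 b c a = d4 a b c ∧ d6 b c a = d6 a b c ∧ d7 b c a = d7 a b c := by
  have h2 : (2 : R) = 0 := CharTwo.two_eq_zero
  unfold d4 d6 d7 dF dE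
  refine ⟨?_, ?_, ?_⟩ <;> grind
end dickson


section dickson
variable {R : Type} [CommRing R] [CharP R 2]
theorem d_th (a b c : R) : d4 (a + b + c) (a + c) a = d4 a b c ∧
    d6 (a + b + c) (a + c) a = d6 a b c ∧ d7 (a + b + c) (a + c) a = d7 a b c := by
  have h2 : (2 : R) = 0 := CharTwo.two_eq_zero
  unfold d4 d6 d7 dF dE
  refine ⟨?_, ?_, ?_⟩ <;> grind
theorem d_f1 (a b c : R) : d4 (a + b + c) a c = d4 a b c ∧
    d6 (a + b + c) a c = d6 a b c ∧ d7 (a + b + c) a c = d7 a b c := by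
  have h2 : (2 : R) = 0 := CharTwo.two_eq_zero
  unfold d4 d6 d7 dF dE
  refine ⟨?_, ?_, ?_⟩ <;> grind
end dickson

section c2
variable (K : Type) [Field K]

local notation "𝐱" => Xvar K (Fin 8)

def eS : RFF K (Fin 8) := 𝐱 0 + 𝐱 1 + 𝐱 2 + 𝐱 3 + 𝐱 4 + 𝐱 5 + 𝐱 6 + 𝐱 7
def eL1 : RFF K (Fin 8) := 𝐱 1 + 𝐱 3 + 𝐱 5 + 𝐱 7
def eL2 : RFF K (Fin 8) := 𝐱 2 + 𝐱 3 + 𝐱 6 + 𝐱 7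
def eL3 : RFF K (Fin 8) := 𝐱 4 + 𝐱 5 + 𝐱 6 + 𝐱 7
def eN1 : RFF K (Fin 8) := eL1 K ^ 2 + eS K * eL1 K
def eN2 : RFF K (Fin 8) := eL2 K ^ 2 + eS K * eL2 K
def eN3 : RFF K (Fin 8) := eL3 K ^ 2 + eS K * eL3 K

theorem gen_vals :
    (∀ i, pS1 i = ![1,0,3,2,5,4,7,6] i) ∧ (∀ i, pS2 i = ![2,3,0,1,6,7,4,5] i) ∧
    (∀ i, pK i = ![4,5,6,7,0,1,2,3] i) ∧ (∀ i, pTh i = ![0,2,6,4,5,7,3,1] i) ∧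
    (∀ i, pF1 i = ![0,2,3,1,6,4,5,7] i) ∧ (∀ i, pF2 i = ![0,2,1,3,4,6,5,7] i) := by
  decide +kernel

theorem gens_perm (g : Equiv.Perm (Fin 8)) (w : Fin 8 → Fin 8)
    (hw : ∀ i, g i = w i) (i : Fin 8) : permHom K (Fin 8) g (𝐱 i) = 𝐱 (w i) := by
  rw [permHom_X, hw]

/-- how generators move the linear forms -/
theorem gens_lin [CharP K 2] (g : Equiv.Perm (Fin 8))
    (hg : g ∈ ({pS1, pS2, pTh, pK, pF1, pF2} : Set (Equiv.Perm (Fin 8)))) :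
    let p := permHom K (Fin 8) g
    p (eS K) = eS K ∧
    ((p (eL1 K) = eL1 K + eS K ∧ p (eL2 K) = eL2 K ∧ p (eL3 K) = eL3 K) ∨
     (p (eL1 K) = eL1 K ∧ p (eL2 K) = eL2 K + eS K ∧ p (eL3 K) = eL3 K) ∨
     (p (eL1 K) = eL1 K ∧ p (eL2 K) = eL2 K ∧ p (eL3 K) = eL3 K + eS K) ∨
     (p (eL1 K) = eL1 K + eL2 K + eL3 K ∧ p (eL2 K) = eL1 K + eL3 K ∧ p (eL3 K) = eL1 K) ∨
     (p (eL1 K) = eL1 K + eL2 K + eL3 K ∧ p (eL2 K) = eL1 K ∧ p (eL3 K) = eL3 K) ∨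
     (p (eL1 K) = eL2 K ∧ p (eL2 K) = eL1 K ∧ p (eL3 K) = eL3 K)) := by
  have : CharP (RFF K (Fin 8)) 2 := charP_of_injective_algebraMap (algebraMap K _).injective 2
  have h2 : (2 : RFF K (Fin 8)) = 0 := CharTwo.two_eq_zero
  obtain ⟨g1, g2, g3, g4, g5, g6⟩ := gen_vals
  simp only [Set.mem_insert_iff, Set.mem_singleton_iff] at hg
  rcases hg with rfl | rfl | rfl | rfl | rfl | rfl <;> intro p
  · have hp : ∀ i, p (𝐱 i) = _ := fun i => gens_perm K _ _ g1 i
    clear_value p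
    simp only [eS, eL1, eL2, eL3, map_add, hp]
    simp only [Matrix.cons_val]
    refine ⟨by ring, Or.inl ⟨?_, ?_, ?_⟩⟩ <;> grind
  · have hp : ∀ i, p (𝐱 i) = _ := fun i => gens_perm K _ _ g2 i
    clear_value p
    simp only [eS, eL1, eL2, eL3, map_add, hp]
    simp only [Matrix.cons_val]
    refine ⟨by ring, Or.inr (Or.inl ⟨?_, ?_, ?_⟩)⟩ <;> grind
  · have hp : ∀ i, p (𝐱 i) = _ := fun i => gens_perm K _ _ g4 i
    clear_value p
    simp only [eS, eL1, eL2, eL3, map_add, hp]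
    simp only [Matrix.cons_val]
    refine ⟨by ring, Or.inr (Or.inr (Or.inr (Or.inl ⟨?_, ?_, ?_⟩)))⟩ <;> grind
  · have hp : ∀ i, p (𝐱 i) = _ := fun i => gens_perm K _ _ g3 i
    clear_value p
    simp only [eS, eL1, eL2, eL3, map_add, hp]
    simp only [Matrix.cons_val]
    refine ⟨by ring, Or.inr (Or.inr (Or.inl ⟨?_, ?_, ?_⟩))⟩ <;> grind
  · have hp : ∀ i, p (𝐱 i) = _ := fun i => gens_perm K _ _ g5 i
    clear_value p
    simp only [eS, eL1, eL2, eL3, map_add, hp]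
    simp only [Matrix.cons_val]
    refine ⟨by ring, Or.inr (Or.inr (Or.inr (Or.inr (Or.inl ⟨?_, ?_, ?_⟩))))⟩ <;> grind
  · have hp : ∀ i, p (𝐱 i) = _ := fun i => gens_perm K _ _ g6 i
    clear_value p
    simp only [eS, eL1, eL2, eL3, map_add, hp]
    simp only [Matrix.cons_val]
    refine ⟨by ring, Or.inr (Or.inr (Or.inr (Or.inr (Or.inr ⟨?_, ?_, ?_⟩))))⟩ <;> grind

end c2


section gen2
variable {K L : Type} [Field K] [Field L] [Algebra K L]

theorem Spans.step2 (A : IntermediateField K L) (a c0 c1 : L) (h0 : c0 ∈ A) (h1 : c1 ∈ A)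
    (h : a ^ 2 = c0 + c1 * a) : Spans A (A ⊔ adjoin K {a}) (Fin 2) := by
  refine Spans.step A _ a 2 ![c0, c1] ?_ ?_ le_rfl
  · intro i; fin_cases i <;> simpa
  · rw [h, Fin.sum_univ_two]; simp

theorem Spans.step3 (A : IntermediateField K L) (a c0 c1 c2 : L) (h0 : c0 ∈ A) (h1 : c1 ∈ A)
    (h2 : c2 ∈ A) (h : a ^ 3 = c0 + c1 * a + c2 * a ^ 2) :
    Spans A (A ⊔ adjoin K {a}) (Fin 3) := by
  refine Spans.step A _ a 3 ![c0, c1, c2] ?_ ?_ le_rfl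
  · intro i; fin_cases i <;> simpa
  · rw [h, Fin.sum_univ_three]; simp

theorem Spans.step4 (A : IntermediateField K L) (a c0 c1 c2 c3 : L) (h0 : c0 ∈ A) (h1 : c1 ∈ A)
    (h2 : c2 ∈ A) (h3 : c3 ∈ A) (h : a ^ 4 = c0 + c1 * a + c2 * a ^ 2 + c3 * a ^ 3) :
    Spans A (A ⊔ adjoin K {a}) (Fin 4) := by
  refine Spans.step A _ a 4 ![c0, c1, c2, c3] ?_ ?_ le_rfl
  · intro i; fin_cases i <;> simpa
  · rw [h, Fin.sum_univ_four]; simp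

theorem Spans.step7 (A : IntermediateField K L) (a c0 c1 c2 c3 c4 c5 c6 : L) (h0 : c0 ∈ A)
    (h1 : c1 ∈ A) (h2 : c2 ∈ A) (h3 : c3 ∈ A) (h4 : c4 ∈ A) (h5 : c5 ∈ A) (h6 : c6 ∈ A)
    (h : a ^ 7 = c0 + c1 * a + c2 * a ^ 2 + c3 * a ^ 3 + c4 * a ^ 4 + c5 * a ^ 5 + c6 * a ^ 6) :
    Spans A (A ⊔ adjoin K {a}) (Fin 7) := by
  refine Spans.step A _ a 7 ![c0, c1, c2, c3, c4, c5, c6] ?_ ?_ le_rfl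
  · intro i; fin_cases i <;> simpa
  · rw [h, Fin.sum_univ_seven]; simp

theorem Spans.mono {A C D : IntermediateField K L} {ι : Type} [Fintype ι] (h : Spans A C ι)
    (hD : D ≤ C) : Spans A D ι := by
  obtain ⟨f, hf⟩ := h
  exact ⟨f, fun x hx => hf x (hD hx)⟩

theorem fixed_adjoin {Γ : Type} [Group Γ] (ρ : Γ →* (L ≃ₐ[K] L)) (T : Set L)
    (h : ∀ t ∈ T, ∀ g, ρ g t = t) (b : L) (hb : b ∈ adjoin K T) (g : Γ) : ρ g b = b := by
  induction hb using IntermediateField.adjoin_induction with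
  | mem x hx => exact h x hx g
  | algebraMap x => simp
  | add x y _ _ hx hy => rw [map_add, hx, hy]
  | inv x _ hx => rw [map_inv₀, hx]
  | mul x y _ _ hx hy => rw [map_mul, hx, hy]

end gen2

section c2
variable (K : Type) [Field K]

local notation "𝐱" => Xvar K (Fin 8)

theorem gens_inv [CharP K 2] (g : Equiv.Perm (Fin 8))
    (hg : g ∈ ({pS1, pS2, pTh, pK, pF1, pF2} : Set (Equiv.Perm (Fin 8)))) :
    let p := permHom K (Fin 8) g
    p (d4 (eN1 K) (eN2 K) (eN3 K)) = d4 (eN1 K) (eN2 K) (eN3 K) ∧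
    p (d6 (eN1 K) (eN2 K) (eN3 K)) = d6 (eN1 K) (eN2 K) (eN3 K) ∧
    p (d7 (eN1 K) (eN2 K) (eN3 K)) = d7 (eN1 K) (eN2 K) (eN3 K) := by
  have : CharP (RFF K (Fin 8)) 2 := charP_of_injective_algebraMap (algebraMap K _).injective 2
  have h2 : (2 : RFF K (Fin 8)) = 0 := CharTwo.two_eq_zero
  intro p
  have hd : p (d4 (eN1 K) (eN2 K) (eN3 K)) = d4 (p (eN1 K)) (p (eN2 K)) (p (eN3 K)) ∧
      p (d6 (eN1 K) (eN2 K) (eN3 K)) = d6 (p (eN1 K)) (p (eN2 K)) (p (eN3 K)) ∧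
      p (d7 (eN1 K) (eN2 K) (eN3 K)) = d7 (p (eN1 K)) (p (eN2 K)) (p (eN3 K)) := by
    simp [d4, d6, d7, dF, dE]
  rw [hd.1, hd.2.1, hd.2.2]
  have hn : p (eN1 K) = p (eL1 K) ^ 2 + p (eS K) * p (eL1 K) ∧
      p (eN2 K) = p (eL2 K) ^ 2 + p (eS K) * p (eL2 K) ∧
      p (eN3 K) = p (eL3 K) ^ 2 + p (eS K) * p (eL3 K) := by
    simp [eN1, eN2, eN3]
  rw [hn.1, hn.2.1, hn.2.2]
  have hgl := gens_lin K g hg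
  simp only at hgl
  change (p _ = _ ∧ ((p _ = _ ∧ p _ = _ ∧ p _ = _) ∨ (p _ = _ ∧ p _ = _ ∧ p _ = _) ∨
    (p _ = _ ∧ p _ = _ ∧ p _ = _) ∨ (p _ = _ ∧ p _ = _ ∧ p _ = _) ∨
    (p _ = _ ∧ p _ = _ ∧ p _ = _) ∨ (p _ = _ ∧ p _ = _ ∧ p _ = _))) at hgl
  obtain ⟨hs, h⟩ := hgl
  clear_value p
  have tr : ∀ x : RFF K (Fin 8), (x + eS K) ^ 2 + eS K * (x + eS K) = x ^ 2 + eS K * x := by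
    intro x; grind
  have ad : ∀ x y : RFF K (Fin 8), (x + y) ^ 2 + eS K * (x + y) = (x ^ 2 + eS K * x) + (y ^ 2 + eS K * y) := by
    intro x; grind
  rw [hs]
  rcases h with ⟨e1, e2, e3⟩ | ⟨e1, e2, e3⟩ | ⟨e1, e2, e3⟩ | ⟨e1, e2, e3⟩ | ⟨e1, e2, e3⟩ | ⟨e1, e2, e3⟩
  · rw [e1, e2, e3, tr]; exact ⟨rfl, rfl, rfl⟩
  · rw [e1, e2, e3, tr]; exact ⟨rfl, rfl, rfl⟩
  · rw [e1, e2, e3, tr]; exact ⟨rfl, rfl, rfl⟩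
  · rw [e1, e2, e3, ad, ad, ad]; exact d_th _ _ _
  · rw [e1, e2, e3, ad, ad]; exact d_f1 _ _ _
  · rw [e1, e2, e3]; exact d_swap _ _ _

def F2 : IntermediateField K (RFF K (Fin 8)) := adjoin K {eS K, eL1 K, eL2 K, eL3 K}

theorem F2_mem : eS K ∈ F2 K ∧ eL1 K ∈ F2 K ∧ eL2 K ∈ F2 K ∧ eL3 K ∈ F2 K := by
  refine ⟨?_, ?_, ?_, ?_⟩ <;> exact subset_adjoin K _ (by simp)

theorem F2_stab [CharP K 2] : Stab (act K G48) (F2 K) := by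
  apply stab_closure
  intro g hg t ht
  obtain ⟨hs, h⟩ := gens_lin K g hg
  obtain ⟨m0, m1, m2, m3⟩ := F2_mem K
  change _ ∈ F2 K
  simp only [Set.mem_insert_iff, Set.mem_singleton_iff] at ht
  rcases ht with rfl | rfl | rfl | rfl
  · rw [hs]; exact m0
  all_goals
    rcases h with ⟨e1, e2, e3⟩ | ⟨e1, e2, e3⟩ | ⟨e1, e2, e3⟩ | ⟨e1, e2, e3⟩ | ⟨e1, e2, e3⟩ | ⟨e1, e2, e3⟩ <;>
    first
      | (rw [e1]; first | assumption | exact add_mem (by assumption) (by assumption) | exact add_mem (add_mem (by assumption) (by assumption)) (by assumption))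
      | (rw [e2]; first | assumption | exact add_mem (by assumption) (by assumption) | exact add_mem (add_mem (by assumption) (by assumption)) (by assumption))
      | (rw [e3]; first | assumption | exact add_mem (by assumption) (by assumption) | exact add_mem (add_mem (by assumption) (by assumption)) (by assumption))

theorem F2_faith : Faith (act K G48) (F2 K) := by
  intro g hg
  obtain ⟨m0, m1, m2, m3⟩ := F2_mem K
  have key : ∀ A : Finset (Fin 8), act K G48 g (∑ i ∈ A, 𝐱 i) = ∑ i ∈ A, 𝐱 i →
      ∀ i, i ∈ A → (g : Equiv.Perm (Fin 8)) i ∈ A := by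
    intro A hA i hi
    rw [map_sum] at hA
    simp only [act_X] at hA
    have := sum_X_inj K _ _ ((Finset.sum_map A (g : Equiv.Perm (Fin 8)).toEmbedding 𝐱).trans hA)
    rw [← this]
    exact Finset.mem_map_of_mem (g : Equiv.Perm (Fin 8)).toEmbedding hi
  have k1 := key {1, 3, 5, 7} (by
    have : ∑ i ∈ ({1, 3, 5, 7} : Finset (Fin 8)), 𝐱 i = eL1 K := by
      unfold eL1; simp [Finset.sum_insert, add_assoc]
    rw [this]; exact hg _ m1)
  have k2 := key {2, 3, 6, 7} (by
    have : ∑ i ∈ ({2, 3, 6, 7} : Finset (Fin 8)), 𝐱 i = eL2 K := by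
      unfold eL2; simp [Finset.sum_insert, add_assoc]
    rw [this]; exact hg _ m2)
  have k3 := key {4, 5, 6, 7} (by
    have : ∑ i ∈ ({4, 5, 6, 7} : Finset (Fin 8)), 𝐱 i = eL3 K := by
      unfold eL3; simp [Finset.sum_insert, add_assoc]
    rw [this]; exact hg _ m3)
  have kc : ∀ A : Finset (Fin 8), (∀ i, i ∈ A → (g : Equiv.Perm (Fin 8)) i ∈ A) →
      ∀ i, i ∈ A ↔ (g : Equiv.Perm (Fin 8)) i ∈ A := by
    intro A hA i
    refine ⟨hA i, fun h => ?_⟩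
    have : A.map (g : Equiv.Perm (Fin 8)).toEmbedding = A := by
      apply Finset.eq_of_subset_of_card_le
      · intro j hj
        obtain ⟨k, hk, rfl⟩ := Finset.mem_map.1 hj
        exact hA k hk
      · simp
    rw [← this] at h
    simpa using h
  have hfin : ∀ i j : Fin 8, (i ∈ ({1, 3, 5, 7} : Finset (Fin 8)) ↔ j ∈ ({1, 3, 5, 7} : Finset (Fin 8))) →
      (i ∈ ({2, 3, 6, 7} : Finset (Fin 8)) ↔ j ∈ ({2, 3, 6, 7} : Finset (Fin 8))) →
      (i ∈ ({4, 5, 6, 7} : Finset (Fin 8)) ↔ j ∈ ({4, 5, 6, 7} : Finset (Fin 8))) → j = i := by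
    decide +kernel
  apply Subtype.ext
  ext1 i
  exact hfin _ _ (kc _ k1 i) (kc _ k2 i) (kc _ k3 i)

theorem F2_fixed [CharP K 2] (x : RFF K (Fin 8)) (hx : x ∈ F2 K)
    (hfix : ∀ g, act K G48 g x = x) :
    x ∈ adjoin K {eS K, d4 (eN1 K) (eN2 K) (eN3 K), d6 (eN1 K) (eN2 K) (eN3 K),
      d7 (eN1 K) (eN2 K) (eN3 K)} := by
  have : CharP (RFF K (Fin 8)) 2 := charP_of_injective_algebraMap (algebraMap K _).injective 2
  have h2 : (2 : RFF K (Fin 8)) = 0 := CharTwo.two_eq_zero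
  set B := adjoin K {eS K, d4 (eN1 K) (eN2 K) (eN3 K), d6 (eN1 K) (eN2 K) (eN3 K),
      d7 (eN1 K) (eN2 K) (eN3 K)} with hB
  have mB : eS K ∈ B ∧ d4 (eN1 K) (eN2 K) (eN3 K) ∈ B ∧ d6 (eN1 K) (eN2 K) (eN3 K) ∈ B ∧
      d7 (eN1 K) (eN2 K) (eN3 K) ∈ B := by
    refine ⟨?_, ?_, ?_, ?_⟩ <;> exact subset_adjoin K _ (by simp)
  obtain ⟨mS, m4, m6, m7⟩ := mB
  set n1 := eN1 K
  set n2 := eN2 K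
  set n3 := eN3 K
  have hBfix : ∀ b ∈ B, ∀ g, act K G48 g b = b := by
    intro b hb g
    refine fixed_adjoin _ _ ?_ b hb g
    intro t ht
    apply fix_closure
    intro g hg
    simp only [Set.mem_insert_iff, Set.mem_singleton_iff] at ht
    rcases ht with rfl | rfl | rfl | rfl
    · exact (gens_lin K g hg).1
    · exact (gens_inv K g hg).1
    · exact (gens_inv K g hg).2.1
    · exact (gens_inv K g hg).2.2
  have self : ∀ (A : IntermediateField K (RFF K (Fin 8))) (a), a ∈ A ⊔ adjoin K {a} :=
    fun A a => (le_sup_right : _ ≤ A ⊔ adjoin K {a}) (mem_adjoin_simple_self K a)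
  have up : ∀ (A : IntermediateField K (RFF K (Fin 8))) (a), A ≤ A ⊔ adjoin K {a} :=
    fun A a => le_sup_left
  have s1 := Spans.step7 B n1 (d7 n1 n2 n3) (d6 n1 n2 n3) 0 (d4 n1 n2 n3) 0 0 0
    m7 m6 (zero_mem _) m4 (zero_mem _) (zero_mem _) (zero_mem _) (by
      unfold d4 d6 d7; clear_value n1 n2 n3; grind)
  set B1 := B ⊔ adjoin K {n1} with hB1
  have p1 : n1 ∈ B1 := self _ _
  have u1 : B ≤ B1 := up _ _
  have s2 := Spans.step3 B1 (dE n1 n2) (d6 n1 n2 n3 - n1 ^ 2 * (d4 n1 n2 n3 - n1 ^ 4))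
    (d4 n1 n2 n3 - n1 ^ 4) 0
    (sub_mem (u1 m6) (mul_mem (pow_mem p1 _) (sub_mem (u1 m4) (pow_mem p1 _))))
    (sub_mem (u1 m4) (pow_mem p1 _)) (zero_mem _) (by
      unfold d4 d6; clear_value n1 n2 n3; grind)
  set B2 := B1 ⊔ adjoin K {dE n1 n2} with hB2
  have p2 : dE n1 n2 ∈ B2 := self _ _
  have u2 : B1 ≤ B2 := up _ _
  have s3 := Spans.step2 B2 n2 (dE n1 n2) n1 p2 (u2 p1) (by
      unfold dE; clear_value n1 n2 n3; grind)
  set B3 := B2 ⊔ adjoin K {n2} with hB3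
  have p3 : n2 ∈ B3 := self _ _
  have u3 : B2 ≤ B3 := up _ _
  have mf : dF n1 n2 n3 ∈ B3 := by
    have : dF n1 n2 n3 = d4 n1 n2 n3 - (n1 ^ 2 + dE n1 n2) ^ 2 := by unfold d4; ring
    rw [this]
    exact sub_mem (u3 (u2 (u1 m4))) (pow_mem (add_mem (pow_mem (u3 (u2 p1)) _) (u3 p2)) _)
  have s4 := Spans.step4 B3 n3 (dF n1 n2 n3) (dE n1 n2 * n1) (n1 ^ 2 + dE n1 n2) 0 mf
    (mul_mem (u3 p2) (u3 (u2 p1))) (add_mem (pow_mem (u3 (u2 p1)) _) (u3 p2)) (zero_mem _) (by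
      unfold dF; clear_value n1 n2 n3; grind)
  set B4 := B3 ⊔ adjoin K {n3} with hB4
  have p4 : n3 ∈ B4 := self _ _
  have u4 : B3 ≤ B4 := up _ _
  have q0 : eS K ∈ B4 := u4 (u3 (u2 (u1 mS)))
  have q1 : n1 ∈ B4 := u4 (u3 (u2 p1))
  have q2 : n2 ∈ B4 := u4 p3
  have s5 := Spans.step2 B4 (eL1 K) n1 (eS K) q1 q0 (by simp only [n1, eN1]; grind)
  set B5 := B4 ⊔ adjoin K {eL1 K} with hB5
  have p5 : eL1 K ∈ B5 := self _ _
  have u5 : B4 ≤ B5 := up _ _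
  have s6 := Spans.step2 B5 (eL2 K) n2 (eS K) (u5 q2) (u5 q0) (by simp only [n2, eN2]; grind)
  set B6 := B5 ⊔ adjoin K {eL2 K} with hB6
  have p6 : eL2 K ∈ B6 := self _ _
  have u6 : B5 ≤ B6 := up _ _
  have s7 := Spans.step2 B6 (eL3 K) n3 (eS K) (u6 (u5 p4)) (u6 (u5 q0)) (by simp only [n3, eN3]; grind)
  set B7 := B6 ⊔ adjoin K {eL3 K} with hB7
  have p7 : eL3 K ∈ B7 := self _ _
  have u7 : B6 ≤ B7 := up _ _
  have hF : F2 K ≤ B7 := by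
    unfold F2
    rw [adjoin_le_iff]
    intro t ht
    simp only [Set.mem_insert_iff, Set.mem_singleton_iff] at ht
    rcases ht with rfl | rfl | rfl | rfl
    · exact u7 (u6 (u5 q0))
    · exact u7 (u6 p5)
    · exact u7 p6
    · exact p7
  have sp := ((((((s1.trans s2).trans s3).trans s4).trans s5).trans s6).trans s7).mono hF
  refine artin (act K G48) (F2 K) B (F2_stab K) (F2_faith K) hBfix sp ?_ x hx hfix
  simp only [Fintype.card_prod, Fintype.card_fin]
  exact le_trans (by norm_num) card_G48

theorem main_char2 [CharP K 2] : IsRatExt K (fixedSub K (Fin 8) G48) := by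
  classical
  have memF : ∀ i, 𝐱 i ∈ Submodule.span (F2 K) (Set.range ![1, 𝐱 3, 𝐱 5, 𝐱 6, 𝐱 7]) := by
    obtain ⟨m0, m1, m2, m3⟩ := F2_mem K
    set W := Submodule.span (F2 K) (Set.range ![1, 𝐱 3, 𝐱 5, 𝐱 6, 𝐱 7])
    have w : ∀ i, ![1, 𝐱 3, 𝐱 5, 𝐱 6, 𝐱 7] i ∈ W := fun i => Submodule.subset_span ⟨i, rfl⟩
    have w0 : (1 : RFF K (Fin 8)) ∈ W := w 0
    have w3 : 𝐱 3 ∈ W := w 1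
    have w5 : 𝐱 5 ∈ W := w 2
    have w6 : 𝐱 6 ∈ W := w 3
    have w7 : 𝐱 7 ∈ W := w 4
    have wF : ∀ a ∈ F2 K, a ∈ W := by
      intro a ha
      have := W.smul_mem (⟨a, ha⟩ : F2 K) w0
      rwa [Algebra.smul_def, mul_one] at this
    have x1 : 𝐱 1 ∈ W := by
      have : 𝐱 1 = eL1 K - 𝐱 3 - 𝐱 5 - 𝐱 7 := by unfold eL1; ring
      rw [this]
      exact W.sub_mem (W.sub_mem (W.sub_mem (wF _ m1) w3) w5) w7
    have x2 : 𝐱 2 ∈ W := by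
      have : 𝐱 2 = eL2 K - 𝐱 3 - 𝐱 6 - 𝐱 7 := by unfold eL2; ring
      rw [this]
      exact W.sub_mem (W.sub_mem (W.sub_mem (wF _ m2) w3) w6) w7
    have x4 : 𝐱 4 ∈ W := by
      have : 𝐱 4 = eL3 K - 𝐱 5 - 𝐱 6 - 𝐱 7 := by unfold eL3; ring
      rw [this]
      exact W.sub_mem (W.sub_mem (W.sub_mem (wF _ m3) w5) w6) w7
    have x0 : 𝐱 0 ∈ W := by
      have : 𝐱 0 = eS K - 𝐱 1 - 𝐱 2 - 𝐱 3 - 𝐱 4 - 𝐱 5 - 𝐱 6 - 𝐱 7 := by unfold eS; ring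
      rw [this]
      exact W.sub_mem (W.sub_mem (W.sub_mem (W.sub_mem (W.sub_mem (W.sub_mem (W.sub_mem (wF _ m0) x1) x2) w3) x4) w5) w6) w7
    intro i
    fin_cases i
    exacts [x0, x1, x2, w3, x4, w5, w6, w7]
  have one_mem : (1 : RFF K (Fin 8)) ∈ Submodule.span (F2 K) (Set.range ![1, 𝐱 3, 𝐱 5, 𝐱 6, 𝐱 7]) :=
    Submodule.subset_span ⟨0, rfl⟩
  obtain ⟨S, hS, hSfix, -, hw⟩ := exists_invariants (act K G48) (F2 K) (F2_stab K) (F2_faith K)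
    ![1, 𝐱 3, 𝐱 5, 𝐱 6, 𝐱 7] 4 (by simp) (by
      intro g i
      fin_cases i
      · change act K G48 g 1 ∈ _
        rw [map_one]; exact one_mem
      · change act K G48 g (𝐱 3) ∈ _
        rw [act_X]; exact memF _
      · change act K G48 g (𝐱 5) ∈ _
        rw [act_X]; exact memF _
      · change act K G48 g (𝐱 6) ∈ _
        rw [act_X]; exact memF _
      · change act K G48 g (𝐱 7) ∈ _
        rw [act_X]; exact memF _) one_mem
  have htop : F2 K ⊔ adjoin K (S : Set (RFF K (Fin 8))) = ⊤ := by
    rw [eq_top_iff, ← adjoin_X, adjoin_le_iff]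
    rintro _ ⟨i, rfl⟩
    have := memF i
    generalize 𝐱 i = y at this ⊢
    induction this using Submodule.span_induction with
    | mem x hx => obtain ⟨j, rfl⟩ := hx; exact hw j
    | zero => exact zero_mem _
    | add x y _ _ hx hy => exact add_mem hx hy
    | smul a x _ hx =>
      rw [Algebra.smul_def]
      exact mul_mem ((le_sup_left : F2 K ≤ _) a.2) hx
  set T : Finset (RFF K (Fin 8)) := {eS K, d4 (eN1 K) (eN2 K) (eN3 K),
    d6 (eN1 K) (eN2 K) (eN3 K), d7 (eN1 K) (eN2 K) (eN3 K)} with hT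
  have hTc : (T : Set (RFF K (Fin 8))) = {eS K, d4 (eN1 K) (eN2 K) (eN3 K),
    d6 (eN1 K) (eN2 K) (eN3 K), d7 (eN1 K) (eN2 K) (eN3 K)} := by simp [hT]
  have hTfix : ∀ t ∈ T, ∀ g, act K G48 g t = t := by
    intro t ht
    apply fix_closure
    intro g hg
    simp only [hT, Finset.mem_insert, Finset.mem_singleton] at ht
    rcases ht with rfl | rfl | rfl | rfl
    · exact (gens_lin K g hg).1
    · exact (gens_inv K g hg).1
    · exact (gens_inv K g hg).2.1
    · exact (gens_inv K g hg).2.2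
  refine final _ (T ∪ S) ?_ ?_ (alg_fixed G48)
  · refine (Finset.card_union_le _ _).trans ?_
    have : T.card ≤ 4 := Finset.card_le_four
    omega
  · apply le_antisymm
    · rw [adjoin_le_iff]
      intro t ht
      change t ∈ fixedSub K (Fin 8) G48
      rw [mem_fixedSub]
      simp only [Finset.coe_union, Set.mem_union, Finset.mem_coe] at ht
      rcases ht with ht | ht
      · exact hTfix t ht
      · exact hSfix t ht
    · intro l hl
      rw [mem_fixedSub] at hl
      have := noname (act K G48) (F2 K) (F2_stab K) (F2_faith K) S hSfix l (by
        rw [htop]; trivial) hl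
      refine (adjoin_le_iff.2 ?_ : _ ≤ adjoin K _) this
      rintro x (hx | hx)
      · have h1 := F2_fixed K x hx.1 hx.2
        rw [← hTc] at h1
        refine adjoin.mono K _ _ ?_ h1
        simp
      · exact subset_adjoin K _ (by simp [Finset.mem_coe.1 hx])

end c2


/-- characters of `(ZMod 2)^3` -/
def eps (a i : Fin 8) : ℤ :=
  (-1) ^ ((a : ℕ) % 2 * ((i : ℕ) % 2) + (a : ℕ) / 2 % 2 * ((i : ℕ) / 2 % 2) + (a : ℕ) / 4 * ((i : ℕ) / 4))

/-- lines of the Fano plane -/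
def line (b : Fin 8) : Finset (Fin 8) := Finset.univ.filter (fun a => a ≠ 0 ∧ eps a b = 1)

theorem eps_mul_comm (a i j : Fin 8) : eps a i * eps a j = eps a j * eps a i := mul_comm _ _

theorem eps_vals : (∀ a i, eps a (pS1 i) = eps a 1 * eps a i) ∧
    (∀ a i, eps a (pS2 i) = eps a 2 * eps a i) ∧
    (∀ a i, eps a (pK i) = eps a 4 * eps a i) := by decide +kernel

theorem eps_sq : ∀ a i, eps a i * eps a i = 1 := by decide +kernel
theorem eps_line : ∀ b j, b ≠ 0 → ∏ a ∈ line b, eps a j = 1 := by decide +kernel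
theorem eps_all : ∀ j, ∏ a ∈ Finset.univ.erase 0, eps a j = 1 := by decide +kernel
theorem eps_zero : (∀ j, eps 0 j = 1) ∧ (∀ a, eps a 0 = 1) := by decide +kernel
theorem eps_orth : ∀ i j, ∑ a, eps a i * eps a j = if i = j then 8 else 0 := by decide +kernel
theorem line_vals : line 1 = {2, 4, 6} ∧ line 2 = {1, 4, 5} ∧ line 3 = {3, 4, 7} ∧
    line 4 = {1, 2, 3} ∧ line 5 = {2, 5, 7} ∧ line 6 = {1, 6, 7} ∧ line 7 = {3, 5, 6} := by
  decide +kernel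

def dTh : Equiv.Perm (Fin 8) := ⟨![0, 7, 5, 2, 1, 6, 4, 3], ![0, 4, 3, 7, 6, 2, 5, 1], by decide, by decide⟩
def dF1 : Equiv.Perm (Fin 8) := ⟨![0, 7, 1, 6, 4, 3, 5, 2], ![0, 2, 7, 5, 4, 6, 3, 1], by decide, by decide⟩
def dF2 : Equiv.Perm (Fin 8) := ⟨![0, 2, 1, 3, 4, 6, 5, 7], ![0, 2, 1, 3, 4, 6, 5, 7], by decide, by decide⟩

theorem dual_gens : (dTh 0 = 0 ∧ ∀ a i, eps (dTh a) (pTh i) = eps a i) ∧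
    (dF1 0 = 0 ∧ ∀ a i, eps (dF1 a) (pF1 i) = eps a i) ∧
    (dF2 0 = 0 ∧ ∀ a i, eps (dF2 a) (pF2 i) = eps a i) := by decide +kernel

theorem exists_dual (g : Equiv.Perm (Fin 8)) (hg : g ∈ HH) :
    ∃ d : Equiv.Perm (Fin 8), d 0 = 0 ∧ ∀ a i, eps (d a) (g i) = eps a i := by
  refine closure_ind_fin (P := fun g => ∃ d : Equiv.Perm (Fin 8), d 0 = 0 ∧ ∀ a i, eps (d a) (g i) = eps a i)
    ?_ ?_ ?_ g hg
  · exact ⟨1, rfl, fun _ _ => rfl⟩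
  · rintro x y ⟨d, h0, hd⟩ ⟨e, h0', he⟩
    refine ⟨d * e, ?_, ?_⟩
    · rw [Equiv.Perm.mul_apply, h0', h0]
    · intro a i
      rw [Equiv.Perm.mul_apply, Equiv.Perm.mul_apply, hd, he]
  · intro x hx
    simp only [Set.mem_insert_iff, Set.mem_singleton_iff] at hx
    rcases hx with rfl | rfl | rfl
    · exact ⟨_, dual_gens.1⟩
    · exact ⟨_, dual_gens.2.1⟩
    · exact ⟨_, dual_gens.2.2⟩

section c0
variable (K : Type) [Field K]

local notation "𝐱" => Xvar K (Fin 8)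
local notation "𝐋" => RFF K (Fin 8)

def yy (a : Fin 8) : 𝐋 := ∑ i, (eps a i : 𝐋) * 𝐱 i
def uu (b : Fin 8) : 𝐋 := if b = 0 then 0 else yy K 0 * ∏ a ∈ line b, yy K a
def ww : 𝐋 := yy K 0 ^ 2 * ∏ a ∈ Finset.univ.erase 0, yy K a

theorem yy_HH (g d : Equiv.Perm (Fin 8)) (h : ∀ a i, eps (d a) (g i) = eps a i) (a : Fin 8) :
    permHom K (Fin 8) g (yy K a) = yy K (d a) := by
  unfold yy
  rw [map_sum]
  refine Fintype.sum_equiv g _ _ ?_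
  intro i
  rw [map_mul, permHom_X, map_intCast, h]

theorem uu_HH (g : HH) (b : Fin 8) :
    act K HH g (uu K b) = uu K ((g : Equiv.Perm (Fin 8)) b) := by
  obtain ⟨g, hg⟩ := g
  change permHom K (Fin 8) g (uu K b) = uu K (g b)
  obtain ⟨d, h0, hd⟩ := exists_dual g hg
  have hg0 : g b = 0 ↔ b = 0 := by
    constructor
    · intro h; rw [← HH_zero g hg] at h; exact g.injective h
    · rintro rfl; exact HH_zero g hg
  unfold uu
  by_cases hb : b = 0
  · rw [if_pos hb, if_pos (hg0.2 hb), map_zero]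
  · rw [if_neg hb, if_neg (fun h => hb (hg0.1 h)), map_mul, yy_HH K g d hd, h0, map_prod]
    congr 1
    refine Finset.prod_equiv d ?_ ?_
    · intro i
      simp only [line, Finset.mem_filter, Finset.mem_univ, true_and, hd]
      have hi : d i = 0 ↔ i = 0 := ⟨fun h => d.injective (h.trans h0.symm), fun h => h ▸ h0⟩
      simp only [ne_eq, hi]
    · intro i _
      exact yy_HH K g d hd i

theorem ww_HH (g : HH) : act K HH g (ww K) = ww K := by
  obtain ⟨g, hg⟩ := g
  change permHom K (Fin 8) g (ww K) = ww K
  obtain ⟨d, h0, hd⟩ := exists_dual g hg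
  unfold ww
  rw [map_mul, map_pow, yy_HH K g d hd, h0, map_prod]
  congr 1
  refine Finset.prod_equiv d ?_ ?_
  · intro i
    simp only [Finset.mem_erase, Finset.mem_univ, and_true]
    have hi : d i = 0 ↔ i = 0 := ⟨fun h => d.injective (h.trans h0.symm), fun h => h ▸ h0⟩
    simp only [ne_eq, hi]
  · intro i _
    exact yy_HH K g d hd i

theorem yy_VV (g : Equiv.Perm (Fin 8)) (hg : g ∈ ({pS1, pS2, pK} : Set (Equiv.Perm (Fin 8)))) :
    ∃ j, ∀ a, permHom K (Fin 8) g (yy K a) = (eps a j : 𝐋) * yy K a := by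
  have key : ∀ j, (∀ a i, eps a (g i) = eps a j * eps a i) →
      ∀ a, permHom K (Fin 8) g (yy K a) = (eps a j : 𝐋) * yy K a := by
    intro j hj a
    unfold yy
    rw [map_sum, Finset.mul_sum]
    refine Fintype.sum_equiv g _ _ ?_
    intro i
    rw [map_mul, permHom_X, map_intCast, hj, Int.cast_mul, ← mul_assoc, ← mul_assoc,
      ← Int.cast_mul (eps a j) (eps a j), eps_sq, Int.cast_one, one_mul]
  simp only [Set.mem_insert_iff, Set.mem_singleton_iff] at hg
  rcases hg with rfl | rfl | rfl
  · exact ⟨1, key 1 eps_vals.1⟩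
  · exact ⟨2, key 2 eps_vals.2.1⟩
  · exact ⟨4, key 4 eps_vals.2.2⟩

theorem uu_VV (g : VV) (b : Fin 8) : act K VV g (uu K b) = uu K b := by
  apply fix_closure
  intro g hg
  obtain ⟨j, hj⟩ := yy_VV K g hg
  unfold uu
  split_ifs with hb
  · simp
  · rw [map_mul, map_prod, hj]
    simp only [hj, Finset.prod_mul_distrib]
    rw [← Int.cast_prod, eps_line b j hb, eps_zero.1]
    simp

theorem ww_VV (g : VV) : act K VV g (ww K) = ww K := by
  apply fix_closure
  intro g hg
  obtain ⟨j, hj⟩ := yy_VV K g hg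
  unfold ww
  rw [map_mul, map_pow, map_prod, hj]
  simp only [hj, Finset.prod_mul_distrib]
  rw [← Int.cast_prod, eps_all j, eps_zero.1]
  simp

theorem yy_ne (a : Fin 8) : yy K a ≠ 0 := by
  intro h
  have hl := (algIndep_X K).linearIndependent
  rw [Fintype.linearIndependent_iff] at hl
  have := hl (fun i => (eps a i : K)) (by
    rw [← h]
    unfold yy
    refine Finset.sum_congr rfl fun i _ => ?_
    rw [Algebra.smul_def, map_intCast]) 0
  rw [eps_zero.2] at this
  simp at this

theorem yy_inv (i : Fin 8) : 8 * 𝐱 i = ∑ a, (eps a i : 𝐋) * yy K a := by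
  unfold yy
  simp only [Finset.mul_sum]
  rw [Finset.sum_comm]
  simp only [← mul_assoc, ← Int.cast_mul, ← Finset.sum_mul, ← Int.cast_sum, eps_orth]
  rw [Finset.sum_eq_single i]
  · simp
  · intro j _ hj; simp [hj.symm]
  · simp

/-- the intermediate field generated by the `u_b` and `w` -/
def LP : IntermediateField K 𝐋 := adjoin K (Set.range (uu K) ∪ {ww K})

theorem uu_mem (b) : uu K b ∈ LP K := subset_adjoin K _ (Or.inl ⟨b, rfl⟩)
theorem ww_mem : ww K ∈ LP K := subset_adjoin K _ (Or.inr rfl)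

theorem LP_VV (b : 𝐋) (hb : b ∈ LP K) (g : VV) : act K VV g b = b := by
  refine fixed_adjoin _ _ ?_ b hb g
  rintro t (⟨b, rfl⟩ | rfl) g
  · exact uu_VV K g b
  · exact ww_VV K g

theorem uu_vals : uu K 1 = yy K 0 * (yy K 2 * yy K 4 * yy K 6) ∧
    uu K 2 = yy K 0 * (yy K 1 * yy K 4 * yy K 5) ∧
    uu K 3 = yy K 0 * (yy K 3 * yy K 4 * yy K 7) ∧
    uu K 4 = yy K 0 * (yy K 1 * yy K 2 * yy K 3) ∧
    uu K 5 = yy K 0 * (yy K 2 * yy K 5 * yy K 7) ∧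
    uu K 6 = yy K 0 * (yy K 1 * yy K 6 * yy K 7) ∧
    uu K 7 = yy K 0 * (yy K 3 * yy K 5 * yy K 6) := by
  obtain ⟨l1, l2, l3, l4, l5, l6, l7⟩ := line_vals
  unfold uu
  rw [l1, l2, l3, l4, l5, l6, l7]
  simp [Finset.prod_insert, mul_assoc]

theorem ww_val : ww K = yy K 0 ^ 2 * (yy K 1 * yy K 2 * yy K 3 * yy K 4 * yy K 5 * yy K 6 * yy K 7) := by
  unfold ww
  rw [show (Finset.univ.erase 0 : Finset (Fin 8)) = {1, 2, 3, 4, 5, 6, 7} by decide]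
  simp [Finset.prod_insert, mul_assoc]

theorem yy_sq_mem : yy K 0 ∈ LP K ∧ ∀ a, yy K a ^ 2 ∈ LP K := by
  obtain ⟨u1, u2, u3, u4, u5, u6, u7⟩ := uu_vals K
  have hw := ww_val K
  have n0 := yy_ne K 0
  have n1 := yy_ne K 1
  have n2 := yy_ne K 2
  have n3 := yy_ne K 3
  have n4 := yy_ne K 4
  have n5 := yy_ne K 5
  have n6 := yy_ne K 6
  have n7 := yy_ne K 7
  have h0 : yy K 0 ∈ LP K := by
    have : yy K 0 = uu K 1 * uu K 2 * uu K 3 * uu K 4 * uu K 5 * uu K 6 * uu K 7 / ww K ^ 3 := by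
      rw [u1, u2, u3, u4, u5, u6, u7, hw]
      field_simp
    rw [this]
    exact div_mem (mul_mem (mul_mem (mul_mem (mul_mem (mul_mem (mul_mem (uu_mem K _) (uu_mem K _))
      (uu_mem K _)) (uu_mem K _)) (uu_mem K _)) (uu_mem K _)) (uu_mem K _)) (pow_mem (ww_mem K) _)
  refine ⟨h0, ?_⟩
  have key : ∀ a b c d, yy K a ^ 2 = uu K b * uu K c * uu K d / (ww K * yy K 0) → yy K a ^ 2 ∈ LP K := by
    intro a b c d h
    rw [h]
    exact div_mem (mul_mem (mul_mem (uu_mem K _) (uu_mem K _)) (uu_mem K _)) (mul_mem (ww_mem K) h0)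
  intro a
  fin_cases a
  · exact pow_mem h0 _
  · exact key 1 2 4 6 (by rw [u2, u4, u6, hw]; field_simp)
  · exact key 2 1 4 5 (by rw [u1, u4, u5, hw]; field_simp)
  · exact key 3 3 4 7 (by rw [u3, u4, u7, hw]; field_simp)
  · exact key 4 1 2 3 (by rw [u1, u2, u3, hw]; field_simp)
  · exact key 5 2 5 7 (by rw [u2, u5, u7, hw]; field_simp)
  · exact key 6 1 6 7 (by rw [u1, u6, u7, hw]; field_simp)
  · exact key 7 3 5 6 (by rw [u3, u5, u6, hw]; field_simp)

theorem VV_fixed [CharZero K] (x : 𝐋) (hfix : ∀ g, act K VV g x = x) : x ∈ LP K := by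
  have : CharZero 𝐋 := charZero_of_injective_algebraMap (algebraMap K _).injective
  obtain ⟨u1, u2, u3, u4, u5, u6, u7⟩ := uu_vals K
  obtain ⟨m0, msq⟩ := yy_sq_mem K
  have self : ∀ (A : IntermediateField K (RFF K (Fin 8))) (a), a ∈ A ⊔ adjoin K {a} :=
    fun A a => (le_sup_right : _ ≤ A ⊔ adjoin K {a}) (mem_adjoin_simple_self K a)
  have up : ∀ (A : IntermediateField K (RFF K (Fin 8))) (a), A ≤ A ⊔ adjoin K {a} :=
    fun A a => le_sup_left
  have s1 := Spans.step2 (LP K) (yy K 1) (yy K 1 ^ 2) 0 (msq 1) (zero_mem _) (by ring)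
  set B1 := LP K ⊔ adjoin K {yy K 1} with hB1
  have v1 : LP K ≤ B1 := up _ _
  have s2 := Spans.step2 B1 (yy K 2) (yy K 2 ^ 2) 0 (v1 (msq 2)) (zero_mem _) (by ring)
  set B2 := B1 ⊔ adjoin K {yy K 2} with hB2
  have v2 : B1 ≤ B2 := up _ _
  have s3 := Spans.step2 B2 (yy K 4) (yy K 4 ^ 2) 0 (v2 (v1 (msq 4))) (zero_mem _) (by ring)
  set B3 := B2 ⊔ adjoin K {yy K 4} with hB3
  have v3 : B2 ≤ B3 := up _ _
  have w : ∀ a ∈ LP K, a ∈ B3 := fun a ha => v3 (v2 (v1 ha))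
  have y1 : yy K 1 ∈ B3 := v3 (v2 (self _ _))
  have y2 : yy K 2 ∈ B3 := v3 (self _ _)
  have y4 : yy K 4 ∈ B3 := self _ _
  have key : ∀ a b c d, yy K b ∈ B3 → yy K c ∈ B3 → uu K d = yy K 0 * (yy K b * yy K c * yy K a) →
      yy K a ∈ B3 := by
    intro a b c d hb hc hd
    have : yy K a = uu K d / (yy K 0 * (yy K b * yy K c)) := by
      rw [hd]
      have := yy_ne K 0; have := yy_ne K b; have := yy_ne K c
      field_simp
    rw [this]
    exact div_mem (w _ (uu_mem K d)) (mul_mem (w _ m0) (mul_mem hb hc))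
  have y3 := key 3 1 2 4 y1 y2 u4
  have y5 := key 5 1 4 2 y1 y4 u2
  have y6 := key 6 2 4 1 y2 y4 u1
  have y7 := key 7 3 4 3 y3 y4 u3
  have yall : ∀ a, yy K a ∈ B3 := by
    intro a
    fin_cases a
    exacts [w _ m0, y1, y2, y3, y4, y5, y6, y7]
  have htop : (⊤ : IntermediateField K 𝐋) ≤ B3 := by
    rw [← adjoin_X, adjoin_le_iff]
    rintro _ ⟨i, rfl⟩
    have : 𝐱 i = (∑ a, (eps a i : 𝐋) * yy K a) / 8 := by
      rw [← yy_inv]; field_simp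
    rw [this]
    exact div_mem (sum_mem fun a _ => mul_mem (intCast_mem B3 _) (yall a)) (ofNat_mem B3 8)
  have sp := ((s1.trans s2).trans s3).mono htop
  refine artin (act K VV) ⊤ (LP K) (fun _ _ _ => trivial) ?_ (LP_VV K) sp ?_ x trivial hfix
  · intro g hg
    apply Subtype.ext
    ext1 i
    have := hg (𝐱 i) trivial
    rw [act_X] at this
    exact X_inj K this
  · simp only [Fintype.card_prod, Fintype.card_fin]
    exact card_VV

end c0


section rep
variable {K : Type} [Field K]

/-- the seven quadratic forms, as symmetric matrices (`QQ 0 = 0`) -/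
def QQ (β : K) : Fin 8 → Matrix (Fin 3) (Fin 3) K :=
  ![0,
    !![-(2*β+2), 0, 0; 0, β, 4-β; 0, 4-β, β],
    !![β, 0, 4-β; 0, -(2*β+2), 0; 4-β, 0, β],
    !![β, 4-β, 0; 4-β, β, 0; 0, 0, -(2*β+2)],
    !![β, -(4-β), 0; -(4-β), β, 0; 0, 0, -(2*β+2)],
    !![β, 0, -(4-β); 0, -(2*β+2), 0; -(4-β), 0, β],
    !![-(2*β+2), 0, 0; 0, β, -(4-β); 0, -(4-β), β],
    !![4, 0, 0; 0, 4, 0; 0, 0, 4]]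

def Good (β : K) (g : Equiv.Perm (Fin 8)) (R : Matrix (Fin 3) (Fin 3) K) : Prop :=
  R.det = 1 ∧ ∀ b, R.transpose * QQ β b * R = QQ β (g b)

theorem Good.mul {β : K} {g h R R'} (hg : Good β g R) (hh : Good β h R') : Good β (g * h) (R' * R) := by
  refine ⟨by rw [Matrix.det_mul, hg.1, hh.1, one_mul], fun b => ?_⟩
  rw [Equiv.Perm.mul_apply, ← hg.2, ← hh.2, Matrix.transpose_mul]
  simp only [Matrix.mul_assoc]

theorem Good_one (β : K) : Good β 1 1 := ⟨by simp, fun b => by simp⟩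

theorem Good_F1 (β : K) : Good β pF1 !![0,1,0;0,0,1;1,0,0] := by
  refine ⟨by simp [Matrix.det_fin_three], fun b => ?_⟩
  rw [gen_vals.2.2.2.2.1 b]
  fin_cases b <;> ext i j <;> fin_cases i <;> fin_cases j <;>
    simp [QQ, Matrix.mul_apply, Fin.sum_univ_three]

theorem Good_F2 (β : K) : Good β pF2 !![0,-1,0;-1,0,0;0,0,-1] := by
  refine ⟨by simp [Matrix.det_fin_three], fun b => ?_⟩
  rw [gen_vals.2.2.2.2.2 b]
  fin_cases b <;> ext i j <;> fin_cases i <;> fin_cases j <;>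
    simp [QQ, Matrix.mul_apply, Fin.sum_univ_three]

set_option maxHeartbeats 2000000 in
theorem Good_Th_aux [CharZero K] (β : K) (hβ : β ^ 2 = β - 2) (b : Fin 8) (i j : Fin 3) (hij : i ≤ j)  :
    (!![(β-1)/2, 1/2, 1/2; 0, β/2, -β/2; (β-1)/2, -1/2, -1/2].transpose * QQ β b *
      !![(β-1)/2, 1/2, 1/2; 0, β/2, -β/2; (β-1)/2, -1/2, -1/2]) i j = QQ β (pTh b) i j := by
  rw [gen_vals.2.2.2.1 b]
  simp only [Matrix.mul_apply, Fin.sum_univ_three, Matrix.transpose_apply]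
  have h3 : β ^ 3 = -β - 2 := by linear_combination (β + 1) * hβ
  fin_cases b <;> fin_cases i <;> fin_cases j <;>
    first
      | exact absurd hij (by decide)
      | (simp [QQ] <;> field_simp <;> ring_nf <;> simp only [hβ, h3] <;> ring)

theorem sym_triple (R Q : Matrix (Fin 3) (Fin 3) K) (hQ : Q.transpose = Q) (i j : Fin 3) :
    (R.transpose * Q * R) j i = (R.transpose * Q * R) i j := by
  have : (R.transpose * Q * R).transpose = R.transpose * Q * R := by
    simp only [Matrix.transpose_mul, Matrix.transpose_transpose, hQ, Matrix.mul_assoc]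
  conv_rhs => rw [← this]
  rfl

theorem QQ_symm (β : K) (b : Fin 8) : (QQ β b).transpose = QQ β b := by
  ext i j
  fin_cases b <;> fin_cases i <;> fin_cases j <;> rfl

theorem Good_Th [CharZero K] (β : K) (hβ : β ^ 2 = β - 2) :
    Good β pTh !![(β-1)/2, 1/2, 1/2; 0, β/2, -β/2; (β-1)/2, -1/2, -1/2] := by
  refine ⟨by simp [Matrix.det_fin_three]; grind, fun b => ?_⟩
  ext i j
  rcases le_total i j with h | h
  · exact Good_Th_aux β hβ b i j h
  · have := Good_Th_aux β hβ b j i h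
    rw [← QQ_symm β (pTh b), Matrix.transpose_apply, ← this]
    exact (sym_triple _ _ (QQ_symm β b) i j).symm

theorem exists_Good [CharZero K] (β : K) (hβ : β ^ 2 = β - 2) (g : Equiv.Perm (Fin 8)) (hg : g ∈ HH) :
    ∃ R, Good β g R := by
  refine closure_ind_fin (P := fun g => ∃ R, Good β g R) ?_ ?_ ?_ g hg
  · exact ⟨1, Good_one β⟩
  · rintro x y ⟨R, hR⟩ ⟨R', hR'⟩
    exact ⟨_, hR.mul hR'⟩
  · intro x hx
    simp only [Set.mem_insert_iff, Set.mem_singleton_iff] at hx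
    rcases hx with rfl | rfl | rfl
    · exact ⟨_, Good_Th β hβ⟩
    · exact ⟨_, Good_F1 β⟩
    · exact ⟨_, Good_F2 β⟩

theorem Good_unique_one [CharZero K] (β : K) (hβ : β ^ 2 = β - 2) (T : Matrix (Fin 3) (Fin 3) K)
    (hT : Good β 1 T) : T = 1 := by
  obtain ⟨hd, hT⟩ := hT
  have c : ∀ (A B : Matrix (Fin 3) (Fin 3) K), T.transpose * A * T = A → T.transpose * B * T = B →
     ∀ a b : K, T.transpose * (a • A + b • B) * T = (a • A + b • B) := by
    intro A B hA hB a b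
    rw [Matrix.mul_add, Matrix.add_mul, Matrix.mul_smul, Matrix.mul_smul, Matrix.smul_mul,
      Matrix.smul_mul, hA, hB]
  have k : ∀ b b', ∀ a a' : K, T.transpose * (a • QQ β b + a' • QQ β b') * T = a • QQ β b + a' • QQ β b' :=
    fun b b' a a' => c _ _ (hT b) (hT b') a a'
  have sq : ∀ b b' : Fin 8, ∀ M : Matrix (Fin 3) (Fin 3) K, (-(10 - 6 * β)/112) • (QQ β b + QQ β b') + ((10 - 6 * β)/112 * (β / 2)) • QQ β 7 = M →
      T.transpose * M * T = M := by
    intro b b' M hM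
    have := c _ _ (c _ _ (hT b) (hT b') 1 1) (hT 7) (-(10 - 6 * β)/112) ((10 - 6 * β)/112 * (β / 2))
    rw [one_smul, one_smul] at this
    change _ * (_ + _ • QQ β 7) * _ = (_ + _ • QQ β 7) at this
    rw [hM] at this
    exact this
  have e1 := sq 1 6 !![1,0,0;0,0,0;0,0,0] (by
    ext i j
    fin_cases i <;> fin_cases j <;> simp [QQ] <;> grind)
  have e2 := sq 2 5 !![0,0,0;0,1,0;0,0,0] (by
    ext i j
    fin_cases i <;> fin_cases j <;> simp [QQ] <;> grind)
  have e3 := sq 3 4 !![0,0,0;0,0,0;0,0,1] (by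
    ext i j
    fin_cases i <;> fin_cases j <;> simp [QQ] <;> grind)
  have cr : ∀ b b' : Fin 8, ∀ M : Matrix (Fin 3) (Fin 3) K, ((3+β)/28) • QQ β b + (-(3+β)/28) • QQ β b' = M →
      T.transpose * M * T = M := by
    intro b b' M hM
    rw [← hM]; exact k _ _ _ _
  have f1 := cr 1 6 !![0,0,0;0,0,1;0,1,0] (by
    ext i j
    fin_cases i <;> fin_cases j <;> simp [QQ] <;> grind)
  have f2 := cr 2 5 !![0,0,1;0,0,0;1,0,0] (by
    ext i j
    fin_cases i <;> fin_cases j <;> simp [QQ] <;> grind)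
  clear sq cr k c hT
  have ee : ∀ {A : Matrix (Fin 3) (Fin 3) K}, T.transpose * A * T = A → ∀ i j,
    (T.transpose * A * T) i j = A i j := fun h i j => by rw [h]
  have e1a := ee e1 0 0
  have e1b := ee e1 1 1
  have e1c := ee e1 2 2
  have e2a := ee e2 0 0
  have e2b := ee e2 1 1
  have e2c := ee e2 2 2
  have e3a := ee e3 0 0
  have e3b := ee e3 1 1
  have e3c := ee e3 2 2
  have f1 := ee f1 1 2
  have f2 := ee f2 0 2
  simp [Matrix.mul_apply, Fin.sum_univ_three, Matrix.transpose_apply] at e1a e1b e1c e2a e2b e2c e3a e3b e3c f1 f2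
  rw [Matrix.det_fin_three] at hd
  simp only [e1b, e1c, e2a, e2c, e3a, e3b, mul_zero, zero_mul, add_zero, zero_add, sub_zero] at f1 f2 hd
  have g1 : T 2 2 = T 1 1 := by
    have : (T 1 1) * (T 1 1 * T 2 2) = T 1 1 * 1 := by grind
    grind
  have g2 : T 0 0 = T 2 2 := by grind
  have g3 : T 0 0 = 1 := by grind
  ext i j
  fin_cases i <;> fin_cases j <;> simp <;> grind

theorem Good_unique [CharZero K] (β : K) (hβ : β ^ 2 = β - 2) (g : Equiv.Perm (Fin 8)) 
    (R R' : Matrix (Fin 3) (Fin 3) K) (hR : Good β g R) (hR' : Good β g R') : R = R' := by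
  have hu : IsUnit R.det := by rw [hR.1]; exact isUnit_one
  have hi : Good β g⁻¹ R⁻¹ := by
    refine ⟨by rw [Matrix.det_nonsing_inv, hR.1]; simp, fun b => ?_⟩
    have := hR.2 (g⁻¹ b)
    rw [show g (g⁻¹ b) = b by simp] at this
    rw [← this]
    rw [Matrix.mul_assoc, Matrix.mul_assoc, Matrix.mul_nonsing_inv _ hu, Matrix.mul_one, ← Matrix.mul_assoc,
      ← Matrix.transpose_mul, Matrix.mul_nonsing_inv _ hu, Matrix.transpose_one, Matrix.one_mul]
  have h1 := hi.mul hR'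
  rw [inv_mul_cancel] at h1
  have h2 := Good_unique_one β hβ _ h1
  have h3 : R' * R⁻¹ * R = R := by rw [h2, Matrix.one_mul]
  rw [Matrix.mul_assoc, Matrix.nonsing_inv_mul _ hu, Matrix.mul_one] at h3
  exact h3.symm

/-- the three-dimensional representation -/
def rep [CharZero K] (β : K) (hβ : β ^ 2 = β - 2) (g : HH) : Matrix (Fin 3) (Fin 3) K :=
  (exists_Good β hβ g g.2).choose

theorem rep_good [CharZero K] (β : K) (hβ : β ^ 2 = β - 2) (g : HH) : Good β g (rep β hβ g) :=
  (exists_Good β hβ g g.2).choose_spec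

theorem rep_mul [CharZero K] (β : K) (hβ : β ^ 2 = β - 2) (g h : HH) :
    rep β hβ (g * h) = rep β hβ h * rep β hβ g :=
  Good_unique β hβ _ _ _ (rep_good β hβ _) ((rep_good β hβ g).mul (rep_good β hβ h))

theorem rep_one [CharZero K] (β : K) (hβ : β ^ 2 = β - 2) : rep β hβ 1 = 1 :=
  Good_unique β hβ _ _ _ (rep_good β hβ _) (Good_one β)

/-- scalar matrices only come from the identity -/
theorem rep_scalar [CharZero K] (β : K) (hβ : β ^ 2 = β - 2) (g : HH) (l : K)
    (h : rep β hβ g = l • 1) : g = 1 := by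
  obtain ⟨hd, hQ⟩ := rep_good β hβ g
  rw [h] at hd hQ
  have hQ' : ∀ b, QQ β ((g : Equiv.Perm (Fin 8)) b) = (l ^ 2) • QQ β b := by
    intro b
    rw [← hQ b]
    simp [smul_smul, sq]
  have h3 : l ^ 3 = 1 := by
    simpa [Matrix.det_smul] using hd
  have h4 : ∑ b, (QQ β b 0 0) ^ 2 = l ^ 4 * ∑ b, (QQ β b 0 0) ^ 2 := by
    conv_lhs => rw [← Equiv.sum_comp (g : Equiv.Perm (Fin 8))]
    rw [Finset.mul_sum]
    refine Finset.sum_congr rfl fun b _ => ?_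
    rw [hQ' b]
    simp; ring
  have h5 : ∑ b, (QQ β b 0 0) ^ 2 = 28 * β := by
    rw [Fin.sum_univ_eight]
    simp [QQ]; grind
  have hb : β ≠ 0 := by rintro rfl; norm_num at hβ
  rw [h5] at h4
  have hl : l = 1 := by
    have : l ^ 4 = 1 := by
      have h28 : (28 * β) ≠ 0 := mul_ne_zero (by norm_num) hb
      have : (l ^ 4 - 1) * (28 * β) = 0 := by linear_combination -h4
      rcases mul_eq_zero.1 this with h | h
      · linear_combination h
      · exact absurd h h28
    linear_combination this - l * h3
  subst hl
  have n1 : 4 - β ≠ 0 := by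
    intro h
    have : β = 4 := by linear_combination -h
    subst this; norm_num at hβ
  have key : ∀ b : Fin 8, QQ β b 0 1 + 2 * QQ β b 0 2 + 4 * QQ β b 1 2 =
      ((![0,4,2,1,-1,-2,-4,0] b : ℤ) : K) * (4 - β) := by
    intro b
    fin_cases b <;> simp [QQ] <;> ring
  apply Subtype.ext
  ext1 b
  have h6 := key ((g : Equiv.Perm (Fin 8)) b)
  rw [hQ' b, one_pow, one_smul, key b] at h6
  have h7 := Int.cast_injective (mul_right_cancel₀ n1 h6)
  have h8 : ∀ b c : Fin 8, (![0,4,2,1,-1,-2,-4,0] b : ℤ) = ![0,4,2,1,-1,-2,-4,0] c →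
      b = c ∨ (b = 0 ∧ c = 7) ∨ (b = 7 ∧ c = 0) := by decide +kernel
  have h0 := HH_zero _ g.2
  change (g : Equiv.Perm (Fin 8)) b = b
  rcases h8 _ _ h7 with h | ⟨rfl, h⟩ | ⟨h, h'⟩
  · exact h.symm
  · exact h0
  · rw [← h0] at h'
    have := (g : Equiv.Perm (Fin 8)).injective h'
    rw [h] at this; exact absurd this (by decide)

end rep


section speiser
variable {K L Γ : Type} [Field K] [Field L] [Algebra K L] [Group Γ] [Fintype Γ]

theorem speiser (ρ : Γ →* (L ≃ₐ[K] L)) (F : IntermediateField K L)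
    (hs : Stab ρ F) (hf : Faith ρ F) (R : Γ → Matrix (Fin 3) (Fin 3) K)
    (hR : ∀ g h, R (g * h) = R h * R g) (hR1 : R 1 = 1) :
    ∃ M : Matrix (Fin 3) (Fin 3) L, (∀ i j, M i j ∈ F) ∧ M.det ≠ 0 ∧
      ∀ g i j, ρ g (M i j) = ∑ k, algebraMap K L (R g i k) * M k j := by
  classical
  obtain ⟨κ, _, c, d, hc, hd, h, h'⟩ := delta ρ F hs hf
  let v : κ × Fin 3 → (Fin 3 → L) := fun p j => ∑ g, ρ g (c p.1) * algebraMap K L (R g⁻¹ j p.2)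
  have hspan : Submodule.span L (Set.range v) = ⊤ := by
    rw [eq_top_iff, ← (Pi.basisFun L (Fin 3)).span_eq, Submodule.span_le]
    rintro _ ⟨k, rfl⟩
    have : (Pi.basisFun L (Fin 3)) k = ∑ i, d i • v (i, k) := by
      ext j
      simp only [Finset.sum_apply, Pi.smul_apply, smul_eq_mul, v, Finset.mul_sum]
      rw [Finset.sum_comm, Finset.sum_eq_single 1]
      · simp only [← mul_assoc, ← Finset.sum_mul, map_one, AlgEquiv.one_apply, h, one_mul, inv_one, hR1]
        simp [Matrix.one_apply, Pi.single_apply]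
      · intro g _ hg
        simp only [← mul_assoc, ← Finset.sum_mul, h' g hg, zero_mul]
      · simp
    rw [this]
    exact Submodule.sum_mem _ fun i _ => Submodule.smul_mem _ _ (Submodule.subset_span ⟨_, rfl⟩)
  obtain ⟨b, hb, hbs, hbl⟩ := exists_linearIndependent L (Set.range v)
  rw [hspan] at hbs
  let B := Module.Basis.mk hbl (by rw [Subtype.range_coe, hbs])
  let e := B.indexEquiv (Pi.basisFun L (Fin 3))
  choose q hq using fun j => hb (e.symm j).2
  refine ⟨fun i j => v (q j) i, ?_, ?_, ?_⟩
  · intro i j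
    exact sum_mem fun g _ => mul_mem (hs g _ (hc _)) (F.algebraMap_mem _)
  · have hl : LinearIndependent L (fun j => v (q j)) := by
      have h2 := hbl.comp e.symm e.symm.injective
      have h4 : (fun j => v (q j)) = Subtype.val ∘ e.symm := funext hq
      rw [h4]; exact h2
    have h3 := (Matrix.linearIndependent_rows_iff_isUnit (A := Matrix.of fun j => v (q j))).1 hl
    rw [Matrix.isUnit_iff_isUnit_det, ← Matrix.det_transpose] at h3
    exact h3.ne_zero
  · intro g i j
    change ρ g (v (q j) i) = ∑ k, algebraMap K L (R g i k) * v (q j) k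
    simp only [v, map_sum, map_mul, AlgEquiv.commutes, Finset.mul_sum]
    rw [Finset.sum_comm]
    refine Fintype.sum_equiv (Equiv.mulLeft g) _ _ ?_
    intro x
    simp only [Equiv.coe_mulLeft, mul_inv_rev, map_mul, AlgEquiv.mul_apply]
    have : R x⁻¹ = R g * R (x⁻¹ * g⁻¹) := by rw [← hR]; simp
    rw [this, Matrix.mul_apply, map_sum, Finset.mul_sum]
    refine Finset.sum_congr rfl fun k _ => ?_
    rw [map_mul]; ring

end speiser

section fields
variable (K : Type) [Field K]
local notation "𝐋" => RFF K (Fin 8)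

theorem alg_mono {A B : IntermediateField K 𝐋} (h : A ≤ B) (ha : Algebra.IsAlgebraic A 𝐋) :
    Algebra.IsAlgebraic B 𝐋 := by
  letI := (inclusion h).toAlgebra
  haveI : IsScalarTower A B 𝐋 := IsScalarTower.of_algebraMap_eq fun x => rfl
  exact Algebra.IsAlgebraic.tower_top (K := A) B

theorem LP_alg [CharZero K] : Algebra.IsAlgebraic (LP K) 𝐋 := by
  refine alg_mono K (A := fixedSub K (Fin 8) VV) ?_ (alg_fixed VV)
  intro x hx
  rw [mem_fixedSub] at hx
  exact VV_fixed K x hx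

theorem uu_zero : uu K 0 = 0 := by simp [uu]

theorem uw_indep [CharZero K] : AlgebraicIndependent K (fun i : Fin 8 => if i = 0 then ww K else uu K i) := by
  apply algIndep_of_alg le_rfl
  refine alg_mono K ?_ (LP_alg K)
  unfold LP
  rw [adjoin_le_iff]
  rintro _ (⟨i, rfl⟩ | rfl)
  · by_cases h : i = 0
    · subst h; rw [uu_zero]; exact zero_mem _
    · exact subset_adjoin K _ ⟨i, by simp [h]⟩
  · exact subset_adjoin K _ ⟨0, by simp⟩

def ss : 𝐋 := ∑ b, uu K b

theorem ss_ne [CharZero K] : ss K ≠ 0 := by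
  intro h
  have hl := (uw_indep K).linearIndependent
  rw [Fintype.linearIndependent_iff] at hl
  have := hl (fun i => if i = 0 then 0 else 1) (by
    rw [← h, ss]
    refine Finset.sum_congr rfl fun i _ => ?_
    by_cases hi : i = 0
    · subst hi; simp [uu_zero]
    · simp [hi]) 1
  simp at this

theorem uu_inj [CharZero K] (b c : Fin 8) (hb : b ≠ 0) (hc : c ≠ 0) (h : uu K b = uu K c) : b = c := by
  apply (uw_indep K).injective
  simp [hb, hc, h]

theorem ss_HH (g : HH) : act K HH g (ss K) = ss K := by
  unfold ss
  rw [map_sum]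
  refine Fintype.sum_equiv (g : Equiv.Perm (Fin 8)) _ _ fun b => uu_HH K g b

def ub (b : Fin 8) : 𝐋 := uu K b / ss K

theorem ub_HH (g : HH) (b : Fin 8) :
    act K HH g (ub K b) = ub K ((g : Equiv.Perm (Fin 8)) b) := by
  unfold ub
  rw [map_div₀, ss_HH, uu_HH]

theorem ub_inj [CharZero K] (b c : Fin 8) (hb : b ≠ 0) (hc : c ≠ 0) (h : ub K b = ub K c) : b = c := by
  unfold ub at h
  exact uu_inj K b c hb hc ((div_left_inj' (ss_ne K)).1 h)

theorem ub_sum [CharZero K] : ∑ b, ub K b = 1 := by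
  unfold ub
  rw [← Finset.sum_div]
  exact div_self (ss_ne K)

theorem ub_zero : ub K 0 = 0 := by simp [ub, uu_zero]

def EE : IntermediateField K 𝐋 := adjoin K (Set.range (ub K))

theorem ub_mem (b) : ub K b ∈ EE K := subset_adjoin K _ ⟨b, rfl⟩

theorem ss_mem : ss K ∈ LP K := sum_mem fun b _ => uu_mem K b

theorem EE_le : EE K ≤ LP K := by
  unfold EE
  rw [adjoin_le_iff]
  rintro _ ⟨b, rfl⟩
  exact div_mem (uu_mem K b) (ss_mem K)

theorem EE_stab : Stab (act K HH) (EE K) := by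
  intro g
  refine map_adjoin_mem _ _ _ ?_
  rintro _ ⟨b, rfl⟩
  rw [ub_HH]
  exact ub_mem K _

theorem EE_faith [CharZero K] : Faith (act K HH) (EE K) := by
  intro g hg
  apply Subtype.ext
  ext1 b
  change (g : Equiv.Perm (Fin 8)) b = b
  have h0 := HH_zero _ g.2
  by_cases hb : b = 0
  · subst hb; exact h0
  · have := hg _ (ub_mem K b)
    rw [ub_HH] at this
    refine ub_inj K _ _ ?_ hb this
    intro h
    exact hb ((g : Equiv.Perm (Fin 8)).injective (h.trans h0.symm))

/-- the equivariant vector -/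
theorem exists_A [CharZero K] (β : K) (hβ : β ^ 2 = β - 2) : ∃ A : Fin 3 → 𝐋,
    (∀ j, A j ∈ LP K) ∧ A 2 ≠ 0 ∧
    (∀ g j, act K HH g (A j) = ∑ k, algebraMap K 𝐋 (rep β hβ g j k) * A k) ∧
    LP K ≤ adjoin K {A 0 / A 2, A 1 / A 2} ⊔ EE K := by
  obtain ⟨M, hM, hdet, hact⟩ := speiser (act K HH) (EE K) (EE_stab K) (EE_faith K) (rep β hβ)
    (rep_mul β hβ) (rep_one β hβ)
  let w : Fin 3 → 𝐋 := ![1, ss K, ww K]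
  have hw : ∀ g j, act K HH g (w j) = w j := by
    intro g j
    fin_cases j
    · exact map_one _
    · exact ss_HH K g
    · exact ww_HH K g
  have hwm : ∀ j, w j ∈ LP K := by
    intro j
    fin_cases j
    · exact one_mem _
    · exact ss_mem K
    · exact ww_mem K
  let A : Fin 3 → 𝐋 := fun j => ∑ k, M j k * w k
  have hA : ∀ g j, act K HH g (A j) = ∑ k, algebraMap K 𝐋 (rep β hβ g j k) * A k := by
    intro g j
    simp only [A, map_sum, map_mul, hact, hw, Finset.sum_mul, Finset.mul_sum, mul_assoc]
    exact Finset.sum_comm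
  have hAm : ∀ j, A j ∈ LP K := fun j => sum_mem fun k _ => mul_mem (EE_le K (hM j k)) (hwm k)
  have hu : IsUnit M.det := hdet.isUnit
  have hNm : ∀ i j, M⁻¹ i j ∈ EE K := by
    intro i j
    have hMm : ∃ M' : Matrix (Fin 3) (Fin 3) (EE K), M = (algebraMap (EE K) 𝐋).mapMatrix M' :=
      ⟨fun i j => ⟨M i j, hM i j⟩, rfl⟩
    obtain ⟨M', hM'⟩ := hMm
    rw [Matrix.inv_def, Ring.inverse_eq_inv', Matrix.smul_apply, smul_eq_mul, hM', ← RingHom.map_det,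
      ← RingHom.map_adjugate]
    exact mul_mem (inv_mem (Subtype.mem _)) (Subtype.mem _)
  have hinv : ∀ i, w i = ∑ j, M⁻¹ i j * A j := by
    intro i
    have h1 : A = M.mulVec w := rfl
    have h2 : M⁻¹.mulVec A = w := by
      rw [h1, Matrix.mulVec_mulVec, Matrix.nonsing_inv_mul _ hu, Matrix.one_mulVec]
    conv_lhs => rw [← h2]
    rfl
  have hF1 : rep β hβ ⟨pF1, pF1_mem⟩ = !![0,1,0;0,0,1;1,0,0] :=
    Good_unique β hβ _ _ _ (rep_good β hβ _) (Good_F1 β)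
  have hA2 : A 2 ≠ 0 := by
    intro h2
    have h1 : A 0 = 0 := by
      have := hA ⟨pF1, pF1_mem⟩ 2
      rw [hF1, Fin.sum_univ_three, h2] at this
      simpa using this.symm
    have h0 : A 1 = 0 := by
      have := hA ⟨pF1, pF1_mem⟩ 0
      rw [hF1, Fin.sum_univ_three, h1] at this
      simpa using this.symm
    have := hinv 0
    rw [Fin.sum_univ_three, h2, h1, h0] at this
    simp [w] at this
  refine ⟨A, hAm, hA2, hA, ?_⟩
  set B := adjoin K {A 0 / A 2, A 1 / A 2} ⊔ EE K with hB
  have hE : EE K ≤ B := le_sup_right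
  have hq : ∀ j, A j / A 2 ∈ B := by
    have h0 : adjoin K {A 0 / A 2, A 1 / A 2} ≤ B := le_sup_left
    intro j
    fin_cases j
    · exact h0 (subset_adjoin K _ (by simp))
    · exact h0 (subset_adjoin K _ (by simp))
    · change A 2 / A 2 ∈ B
      rw [div_self hA2]; exact one_mem _
  have hwq : ∀ i, w i / A 2 ∈ B := by
    intro i
    rw [hinv i, Finset.sum_div]
    refine sum_mem fun j _ => ?_
    rw [mul_div_assoc]
    exact mul_mem (hE (hNm i j)) (hq j)
  have hA2B : A 2 ∈ B := by
    have : 1 / A 2 ∈ B := hwq 0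
    rw [one_div] at this
    have := inv_mem this
    rwa [inv_inv] at this
  have hwB : ∀ i, w i ∈ B := by
    intro i
    have : w i = w i / A 2 * A 2 := by field_simp
    rw [this]
    exact mul_mem (hwq i) hA2B
  have hsB : ss K ∈ B := hwB 1
  have hwwB : ww K ∈ B := hwB 2
  unfold LP
  rw [adjoin_le_iff]
  rintro _ (⟨b, rfl⟩ | rfl)
  · have : uu K b = ub K b * ss K := by unfold ub; have := ss_ne K; field_simp
    rw [this]
    exact mul_mem (hE (ub_mem K b)) hsB
  · exact hwwB

/-- `X, Y` are algebraically independent -/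
theorem XY_indep [CharZero K] (X Y : 𝐋) (h : LP K ≤ adjoin K {X, Y} ⊔ EE K) :
    AlgebraicIndependent K ![X, Y] := by
  have h8 : AlgebraicIndependent K ![X, Y, ub K 1, ub K 2, ub K 3, ub K 4, ub K 5, ub K 6] := by
    apply algIndep_of_alg le_rfl
    refine alg_mono K ?_ (LP_alg K)
    refine h.trans (sup_le (adjoin_le_iff.2 ?_) (adjoin_le_iff.2 ?_))
    · rintro x (rfl | rfl)
      · exact subset_adjoin K _ ⟨0, rfl⟩
      · exact subset_adjoin K _ ⟨1, rfl⟩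
    · have m1 : ub K 1 ∈ adjoin K (Set.range ![X, Y, ub K 1, ub K 2, ub K 3, ub K 4, ub K 5, ub K 6]) :=
        subset_adjoin K _ ⟨2, rfl⟩
      have m2 : ub K 2 ∈ adjoin K (Set.range ![X, Y, ub K 1, ub K 2, ub K 3, ub K 4, ub K 5, ub K 6]) :=
        subset_adjoin K _ ⟨3, rfl⟩
      have m3 : ub K 3 ∈ adjoin K (Set.range ![X, Y, ub K 1, ub K 2, ub K 3, ub K 4, ub K 5, ub K 6]) :=
        subset_adjoin K _ ⟨4, rfl⟩
      have m4 : ub K 4 ∈ adjoin K (Set.range ![X, Y, ub K 1, ub K 2, ub K 3, ub K 4, ub K 5, ub K 6]) :=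
        subset_adjoin K _ ⟨5, rfl⟩
      have m5 : ub K 5 ∈ adjoin K (Set.range ![X, Y, ub K 1, ub K 2, ub K 3, ub K 4, ub K 5, ub K 6]) :=
        subset_adjoin K _ ⟨6, rfl⟩
      have m6 : ub K 6 ∈ adjoin K (Set.range ![X, Y, ub K 1, ub K 2, ub K 3, ub K 4, ub K 5, ub K 6]) :=
        subset_adjoin K _ ⟨7, rfl⟩
      have hs := ub_sum K
      rw [Fin.sum_univ_eight, ub_zero] at hs
      have m7 : ub K 7 = 1 - ub K 1 - ub K 2 - ub K 3 - ub K 4 - ub K 5 - ub K 6 := by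
        linear_combination hs
      rintro _ ⟨b, rfl⟩
      fin_cases b
      · change ub K 0 ∈ _
        rw [ub_zero]; exact zero_mem _
      · exact m1
      · exact m2
      · exact m3
      · exact m4
      · exact m5
      · exact m6
      · change ub K 7 ∈ _
        rw [m7]
        exact sub_mem (sub_mem (sub_mem (sub_mem (sub_mem (sub_mem (one_mem _) m1) m2) m3) m4) m5) m6
  have := h8.comp ![0, 1] (by decide)
  convert this using 1
  ext i
  fin_cases i <;> rfl

theorem spec_zero (X Y : 𝐋) (h : AlgebraicIndependent K ![X, Y]) (P : MvPolynomial (Fin 2) K)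
    (hP : MvPolynomial.aeval ![X, Y] P = 0) (v : Fin 2 → K) : MvPolynomial.eval v P = 0 := by
  have : P = 0 := h.eq_zero_of_aeval_eq_zero P hP
  rw [this, map_zero]

end fields


section forms
variable {R : Type} [CommRing R]

def qf (β x y z : R) : Fin 8 → R :=
  ![0,
    -(2*β+2)*x^2 + β*(y^2+z^2) + (8-2*β)*(y*z),
    -(2*β+2)*y^2 + β*(z^2+x^2) + (8-2*β)*(z*x),
    -(2*β+2)*z^2 + β*(x^2+y^2) + (8-2*β)*(x*y),
    -(2*β+2)*z^2 + β*(x^2+y^2) - (8-2*β)*(x*y),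
    -(2*β+2)*y^2 + β*(z^2+x^2) - (8-2*β)*(z*x),
    -(2*β+2)*x^2 + β*(y^2+z^2) - (8-2*β)*(y*z),
    4*(x^2+y^2+z^2)]

def f4 (β x y z : R) : R := ∑ b, qf β x y z b ^ 2
def f6 (β x y z : R) : R := ∑ b, qf β x y z b ^ 3
def f14 (β x y z : R) : R := ∏ b ∈ Finset.univ.erase 0, qf β x y z b

def s1 (x y z : R) : R := x^2 + y^2 + z^2
def s2 (x y z : R) : R := x^2*y^2 + y^2*z^2 + z^2*x^2
def s3 (x y z : R) : R := x^2*y^2*z^2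

theorem qf_hom (β x y z t : R) (b : Fin 8) : qf β (t*x) (t*y) (t*z) b = t^2 * qf β x y z b := by
  fin_cases b <;> simp [qf] <;> ring

theorem f4_hom (β x y z t : R) : f4 β (t*x) (t*y) (t*z) = t^4 * f4 β x y z := by
  unfold f4
  simp only [qf_hom, Finset.mul_sum]
  exact Finset.sum_congr rfl fun _ _ => by ring
theorem f6_hom (β x y z t : R) : f6 β (t*x) (t*y) (t*z) = t^6 * f6 β x y z := by
  unfold f6
  simp only [qf_hom, Finset.mul_sum]
  exact Finset.sum_congr rfl fun _ _ => by ring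
theorem f14_hom (β x y z t : R) : f14 β (t*x) (t*y) (t*z) = t^14 * f14 β x y z := by
  unfold f14
  simp only [qf_hom, Finset.prod_mul_distrib, Finset.prod_const]
  rw [show (Finset.univ.erase 0 : Finset (Fin 8)).card = 7 by decide]
  ring

theorem f4_eq (β x y z : R) (hβ : β ^ 2 = β - 2) :
    f4 β x y z = 28*β*s1 x y z^2 + (168-140*β)*s2 x y z := by
  unfold f4 s1 s2
  rw [Fin.sum_univ_eight]
  simp only [qf, Matrix.cons_val]
  linear_combination (12*(x^4+y^4+z^4) - 4*(x^2*y^2+y^2*z^2+z^2*x^2)) * hβ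

theorem f6_eq (β x y z : R) (hβ : β ^ 2 = β - 2) :
    f6 β x y z = (168-84*β)*s1 x y z^3 + (-84+462*β)*s1 x y z*s2 x y z + (-4116-882*β)*s3 x y z := by
  unfold f6 s1 s2 s3
  rw [Fin.sum_univ_eight]
  simp only [qf, Matrix.cons_val]
  have h3 : β ^ 3 = -β - 2 := by linear_combination (β + 1) * hβ
  grind

theorem f14_eq (β x y z : R) (hβ : β ^ 2 = β - 2) :
    f14 β x y z = 256*s1 x y z^7+(4480+448*β)*s1 x y z^5*s2 x y z
      +(-68600+10388*β)*s1 x y z^3*s2 x y z^2+(318304-32144*β)*s1 x y z^4*s3 x y z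
      +(186592-60368*β)*s1 x y z*s2 x y z^3+(-1203440+165032*β)*s1 x y z^2*s2 x y z*s3 x y z
      +(1720488+393764*β)*s1 x y z*s3 x y z^2 := by
  have m : ∀ x y z : R, (-(2*β+2)*x^2 + β*(y^2+z^2) + (8-2*β)*(y*z)) *
      (-(2*β+2)*x^2 + β*(y^2+z^2) - (8-2*β)*(y*z)) =
      (12*β-4)*x^4 + (-8*β+8)*x^2*(y^2+z^2) + (β-2)*(y^4+z^4) + (30*β-60)*(y^2*z^2) := by
    intro x y z
    linear_combination (4*x^4-4*x^2*(y^2+z^2)+y^4+z^4-2*(y^2*z^2)) * hβ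
  unfold f14
  rw [show (Finset.univ.erase 0 : Finset (Fin 8)) = {1, 2, 3, 4, 5, 6, 7} by decide]
  rw [Finset.prod_insert (by decide), Finset.prod_insert (by decide), Finset.prod_insert (by decide),
    Finset.prod_insert (by decide), Finset.prod_insert (by decide), Finset.prod_insert (by decide),
    Finset.prod_singleton]
  simp only [qf, Matrix.cons_val]
  have m1 := m x y z
  have m2 := m y z x
  have m3 := m z x y
  have h3 : β ^ 3 = -β - 2 := by linear_combination (β + 1) * hβ
  set q1 := -(2*β+2)*x^2 + β*(y^2+z^2) + (8-2*β)*(y*z)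
  set q2 := -(2*β+2)*y^2 + β*(z^2+x^2) + (8-2*β)*(z*x)
  set q3 := -(2*β+2)*z^2 + β*(x^2+y^2) + (8-2*β)*(x*y)
  set q4 := -(2*β+2)*z^2 + β*(x^2+y^2) - (8-2*β)*(x*y)
  set q5 := -(2*β+2)*y^2 + β*(z^2+x^2) - (8-2*β)*(z*x)
  set q6 := -(2*β+2)*x^2 + β*(y^2+z^2) - (8-2*β)*(y*z)
  have e : q1 * (q2 * (q3 * (q4 * (q5 * (q6 * (4 * (x^2+y^2+z^2))))))) =
    (q1 * q6) * (q2 * q5) * (q3 * q4) * (4 * (x^2+y^2+z^2)) := by ring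
  rw [e, m1, m2, m3]
  clear_value q1 q2 q3 q4 q5 q6
  clear e m1 m2 m3 m
  unfold s1 s2 s3
  have h4 : ∀ x : R, x ^ 4 = (x ^ 2) ^ 2 := fun x => by ring
  simp only [h4]
  generalize x ^ 2 = a
  generalize y ^ 2 = b
  generalize z ^ 2 = c
  grind
end forms


theorem f14_rel {L : Type} [Field L] [CharZero L] (β e1 e2 e3 F4 F6 F14 : L) (hβ : β ^ 2 = β - 2)
    (h4 : F4 = 28*β*e1^2 + (168-140*β)*e2)
    (h6 : F6 = (168-84*β)*e1^3 + (-84+462*β)*e1*e2 + (-4116-882*β)*e3)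
    (h14 : F14 = 256*e1^7+(4480+448*β)*e1^5*e2
      +(-68600+10388*β)*e1^3*e2^2+(318304-32144*β)*e1^4*e3
      +(186592-60368*β)*e1*e2^3+(-1203440+165032*β)*e1^2*e2*e3
      +(1720488+393764*β)*e1*e3^2) :
    F14 = 16384*e1^7-512*e1^5*F4+(40/7-4*β/7)*e1^3*F4^2-(256/3)*e1^4*F6+(-1/49+β/196)*e1*F4^3
      +(8/7+4*β/21)*e1^2*F4*F6+(2/21-β/63)*e1*F6^2 := by
  subst h4 h6 h14
  have h3 : β ^ 3 = -β - 2 := by linear_combination (β + 1) * hβ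
  have h4 : β ^ 4 = -3 * β + 2 := by linear_combination (β^2 + β-1) * hβ
  field_simp
  ring_nf
  simp only [hβ, h3, h4]
  ring

theorem tower {K L : Type} [Field K] [Field L] [Algebra K L] [CharZero L] (b0 : K) (X Y : L)
    (hb : (algebraMap K L b0) ^ 2 = algebraMap K L b0 - 2)
    (n1 : s1 X Y 1 ≠ 0) (n4 : f4 (algebraMap K L b0) X Y 1 ≠ 0) (n6 : f6 (algebraMap K L b0) X Y 1 ≠ 0) :
    ∃ (ι : Type) (_ : Fintype ι), Fintype.card ι = 168 ∧
      Spans (adjoin K {f6 (algebraMap K L b0) X Y 1 ^ 2 / f4 (algebraMap K L b0) X Y 1 ^ 3,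
        f14 (algebraMap K L b0) X Y 1 / (f4 (algebraMap K L b0) X Y 1 ^ 2 * f6 (algebraMap K L b0) X Y 1)})
        (adjoin K {X, Y}) ι := by
  have bmem : ∀ A : IntermediateField K L, algebraMap K L b0 ∈ A := fun A => A.algebraMap_mem _
  generalize algebraMap K L b0 = β at *
  have h4 := f4_eq β X Y 1 hb
  have h6 := f6_eq β X Y 1 hb
  have h14 := f14_rel β _ _ _ _ _ _ hb h4 h6 (f14_eq β X Y 1 hb)
  have v1 : s1 X Y 1 = X^2 + Y^2 + 1 := by unfold s1; ring
  have v2 : s2 X Y 1 = X^2*Y^2 + Y^2 + X^2 := by unfold s2; ring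
  have v3 : s3 X Y 1 = X^2*Y^2 := by unfold s3; ring
  generalize f4 β X Y 1 = F4 at *
  generalize f6 β X Y 1 = F6 at *
  generalize f14 β X Y 1 = F14 at *
  generalize s1 X Y 1 = e1 at *
  generalize s2 X Y 1 = e2 at *
  generalize s3 X Y 1 = e3 at *
  obtain ⟨p, hp⟩ : ∃ p, p = F6 ^ 2 / F4 ^ 3 := ⟨_, rfl⟩
  obtain ⟨q, hq⟩ : ∃ q, q = F14 / (F4 ^ 2 * F6) := ⟨_, rfl⟩
  obtain ⟨k, hk⟩ : ∃ k, k = e1 * F4 / F6 := ⟨_, rfl⟩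
  rw [← hp, ← hq]
  have np : p ≠ 0 := by rw [hp]; exact div_ne_zero (pow_ne_zero _ n6) (pow_ne_zero _ n4)
  have nk : k ≠ 0 := by rw [hk]; exact div_ne_zero (mul_ne_zero n1 n4) n6
  have r4 : F4 = e1 ^ 2 * (1 / (p * k ^ 2)) := by rw [hp, hk]; field_simp
  have r6 : F6 = e1 ^ 3 * (1 / (p * k ^ 3)) := by rw [hp, hk]; field_simp
  have rq : q = 16384*p^3*k^7-512*p^2*k^5+(40/7-4*β/7)*p*k^3-(256/3)*p^2*k^4+(-1/49+β/196)*k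
      +(8/7+4*β/21)*p*k^2+(2/21-β/63)*p*k := by
    rw [hq, h14, hp, hk]; field_simp
  set B := adjoin K {p, q} with hB
  have mp : p ∈ B := subset_adjoin K _ (by simp)
  have mq : q ∈ B := subset_adjoin K _ (by simp)
  have self : ∀ (A : IntermediateField K L) (a), a ∈ A ⊔ adjoin K {a} :=
    fun A a => (le_sup_right : _ ≤ A ⊔ adjoin K {a}) (mem_adjoin_simple_self K a)
  have up : ∀ (A : IntermediateField K L) (a), A ≤ A ⊔ adjoin K {a} :=
    fun A a => le_sup_left
  have num : ∀ (A : IntermediateField K L) (n : ℕ) [n.AtLeastTwo], (OfNat.ofNat n : L) ∈ A :=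
    fun A n _ => ofNat_mem A n
  have t1 := Spans.step7 B k (q / (16384*p^3)) (-((-1/49+β/196)+(2/21-β/63)*p) / (16384*p^3))
    (-(8/7+4*β/21)*p / (16384*p^3)) (-(40/7-4*β/7)*p / (16384*p^3)) ((256/3)*p^2 / (16384*p^3))
    (512*p^2 / (16384*p^3)) 0
    (div_mem mq (mul_mem (num _ _) (pow_mem mp _)))
    (div_mem (neg_mem (add_mem (add_mem (div_mem (neg_mem (one_mem _)) (num _ _)) (div_mem (bmem _) (num _ _)))
      (mul_mem (sub_mem (div_mem (num _ _) (num _ _)) (div_mem (bmem _) (num _ _))) mp)))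
      (mul_mem (num _ _) (pow_mem mp _)))
    (div_mem (mul_mem (neg_mem (add_mem (div_mem (num _ _) (num _ _)) (div_mem (mul_mem (num _ _) (bmem _)) (num _ _)))) mp)
      (mul_mem (num _ _) (pow_mem mp _)))
    (div_mem (mul_mem (neg_mem (sub_mem (div_mem (num _ _) (num _ _)) (div_mem (mul_mem (num _ _) (bmem _)) (num _ _)))) mp)
      (mul_mem (num _ _) (pow_mem mp _)))
    (div_mem (mul_mem (div_mem (num _ _) (num _ _)) (pow_mem mp _)) (mul_mem (num _ _) (pow_mem mp _)))
    (div_mem (mul_mem (num _ _) (pow_mem mp _)) (mul_mem (num _ _) (pow_mem mp _)))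
    (zero_mem _) (by
      have n0 : (16384 * p ^ 3 : L) ≠ 0 := mul_ne_zero (by norm_num) (pow_ne_zero _ np)
      have : (16384 * p ^ 3) * k ^ 7 = q + (-((-1/49+β/196)+(2/21-β/63)*p)) * k + (-(8/7+4*β/21)*p) * k^2
        + (-(40/7-4*β/7)*p) * k^3 + ((256/3)*p^2) * k^4 + (512*p^2) * k^5 := by
        rw [rq]; ring
      have h7 : k ^ 7 = ((16384 * p ^ 3) * k ^ 7) / (16384 * p ^ 3) := (mul_div_cancel_left₀ _ n0).symm
      rw [h7, this]
      ring)
  set B1 := B ⊔ adjoin K {k} with hB1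
  have mk : k ∈ B1 := self _ _
  have u1 : B ≤ B1 := up _ _
  clear rq h14 hq
  have m2 : e2 / e1 ^ 2 ∈ B1 := by
    have : e2 / e1 ^ 2 = (1 + 5 * β) / 1568 * (1 / (p * k ^ 2) - 28 * β) := by
      have h5 : 1568 * e2 = (1 + 5 * β) * (e1 ^ 2 * (1 / (p * k ^ 2)) - 28 * β * e1 ^ 2) := by
        rw [← r4, h4]
        linear_combination 700 * e2 * hb
      have h5' : e2 = (1 + 5 * β) * (e1 ^ 2 * (1 / (p * k ^ 2)) - 28 * β * e1 ^ 2) / 1568 := by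
        rw [← h5]; field_simp
      rw [h5']
      field_simp
    rw [this]
    exact mul_mem (div_mem (add_mem (one_mem _) (mul_mem (num _ _) (bmem _))) (num _ _))
      (sub_mem (div_mem (one_mem _) (mul_mem (u1 mp) (pow_mem mk _))) (mul_mem (num _ _) (bmem _)))
  have m3 : e3 / e1 ^ 3 ∈ B1 := by
    have : e3 / e1 ^ 3 = (17 - 3 * β) / 75264 * ((168-84*β) + (-84+462*β) * (e2 / e1 ^ 2) - 1 / (p * k ^ 3)) := by
      have h5 : 75264 * e3 = (17 - 3 * β) * ((168-84*β)*e1^3 + (-84+462*β)*e1*e2 - e1 ^ 3 * (1 / (p * k ^ 3))) := by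
        rw [← r6, h6]
        linear_combination 2646 * e3 * hb
      have h5' : e3 = (17 - 3 * β) * ((168-84*β)*e1^3 + (-84+462*β)*e1*e2 - e1 ^ 3 * (1 / (p * k ^ 3))) / 75264 := by
        rw [← h5]; field_simp
      rw [h5']
      field_simp
    rw [this]
    exact mul_mem (div_mem (sub_mem (num _ _) (mul_mem (num _ _) (bmem _))) (num _ _))
      (sub_mem (add_mem (sub_mem (num _ _) (mul_mem (num _ _) (bmem _))) (mul_mem (add_mem (neg_mem (num _ _))
       (mul_mem (num _ _) (bmem _))) m2)) (div_mem (one_mem _) (mul_mem (u1 mp) (pow_mem mk _))))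
  clear h4 h6 r4 r6
  have t2 := Spans.step3 B1 (X ^ 2 / e1) (e3 / e1 ^ 3) (-(e2 / e1 ^ 2)) 1 m3 (neg_mem m2) (one_mem _) (by
    field_simp
    rw [v2, v3, v1]
    ring)
  set B2 := B1 ⊔ adjoin K {X ^ 2 / e1} with hB2
  have mx : X ^ 2 / e1 ∈ B2 := self _ _
  have u2 : B1 ≤ B2 := up _ _
  have t3 := Spans.step2 B2 (Y ^ 2 / e1) (X ^ 2 / e1 * (1 - X ^ 2 / e1) - e2 / e1 ^ 2) (1 - X ^ 2 / e1)
    (sub_mem (mul_mem mx (sub_mem (one_mem _) mx)) (u2 m2)) (sub_mem (one_mem _) mx) (by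
    field_simp
    rw [v2, v1]
    ring)
  set B3 := B2 ⊔ adjoin K {Y ^ 2 / e1} with hB3
  have my : Y ^ 2 / e1 ∈ B3 := self _ _
  have u3 : B2 ≤ B3 := up _ _
  have me : e1 ∈ B3 := by
    have : e1⁻¹ = 1 - X ^ 2 / e1 - Y ^ 2 / e1 := by
      field_simp
      rw [v1]; ring
    have h : e1⁻¹ ∈ B3 := by
      rw [this]
      exact sub_mem (sub_mem (one_mem _) (u3 mx)) my
    have := inv_mem h
    rwa [inv_inv] at this
  have mx2 : X ^ 2 ∈ B3 := by
    have : X ^ 2 = X ^ 2 / e1 * e1 := by field_simp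
    rw [this]; exact mul_mem (u3 mx) me
  have my2 : Y ^ 2 ∈ B3 := by
    have : Y ^ 2 = Y ^ 2 / e1 * e1 := by field_simp
    rw [this]; exact mul_mem my me
  have t4 := Spans.step2 B3 X (X ^ 2) 0 mx2 (zero_mem _) (by ring)
  set B4 := B3 ⊔ adjoin K {X} with hB4
  have u4 : B3 ≤ B4 := up _ _
  have t5 := Spans.step2 B4 Y (Y ^ 2) 0 (u4 my2) (zero_mem _) (by ring)
  refine ⟨_, inferInstance, ?_, ((((t1.trans t2).trans t3).trans t4).trans t5).mono ?_⟩
  · simp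
  · rw [adjoin_le_iff]
    rintro _ (rfl | rfl)
    · exact up _ _ (self _ _)
    · exact self _ _


section main0
variable (K : Type) [Field K]
local notation "𝐋" => RFF K (Fin 8)

theorem qf_sum (β : K) (A : Fin 3 → 𝐋) (b : Fin 8) :
    qf (algebraMap K 𝐋 β) (A 0) (A 1) (A 2) b =
      ∑ i, ∑ j, A i * algebraMap K 𝐋 (QQ β b i j) * A j := by
  simp only [Fin.sum_univ_three]
  have h2 : algebraMap K 𝐋 2 = 2 := map_ofNat _ 2
  have h4 : algebraMap K 𝐋 4 = 4 := map_ofNat _ 4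
  fin_cases b <;> simp [qf, QQ, h2, h4] <;> ring

theorem qf_HH [CharZero K] (β : K) (hβ : β ^ 2 = β - 2) (A : Fin 3 → 𝐋)
    (hA : ∀ g j, act K HH g (A j) = ∑ k, algebraMap K 𝐋 (rep β hβ g j k) * A k)
    (g : HH) (b : Fin 8) :
    act K HH g (qf (algebraMap K 𝐋 β) (A 0) (A 1) (A 2) b) =
      qf (algebraMap K 𝐋 β) (A 0) (A 1) (A 2) ((g : Equiv.Perm (Fin 8)) b) := by
  rw [qf_sum, qf_sum]
  simp only [map_sum, map_mul, AlgEquiv.commutes, hA]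
  rw [← (rep_good β hβ g).2 b]
  simp only [Matrix.mul_apply, Matrix.transpose_apply, Fin.sum_univ_three, map_add, map_mul]
  ring

theorem f4_HH [CharZero K] (β : K) (hβ : β ^ 2 = β - 2) (A : Fin 3 → 𝐋)
    (hA : ∀ g j, act K HH g (A j) = ∑ k, algebraMap K 𝐋 (rep β hβ g j k) * A k)
    (g : HH) :
    act K HH g (f4 (algebraMap K 𝐋 β) (A 0) (A 1) (A 2)) =
      f4 (algebraMap K 𝐋 β) (A 0) (A 1) (A 2) := by
  unfold f4
  rw [map_sum]
  simp only [map_pow, qf_HH K β hβ A hA]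
  exact Equiv.sum_comp (g : Equiv.Perm (Fin 8)) (fun b => qf (algebraMap K 𝐋 β) (A 0) (A 1) (A 2) b ^ 2)

theorem f6_HH [CharZero K] (β : K) (hβ : β ^ 2 = β - 2) (A : Fin 3 → 𝐋)
    (hA : ∀ g j, act K HH g (A j) = ∑ k, algebraMap K 𝐋 (rep β hβ g j k) * A k)
    (g : HH) :
    act K HH g (f6 (algebraMap K 𝐋 β) (A 0) (A 1) (A 2)) =
      f6 (algebraMap K 𝐋 β) (A 0) (A 1) (A 2) := by
  unfold f6
  rw [map_sum]
  simp only [map_pow, qf_HH K β hβ A hA]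
  exact Equiv.sum_comp (g : Equiv.Perm (Fin 8)) (fun b => qf (algebraMap K 𝐋 β) (A 0) (A 1) (A 2) b ^ 3)

theorem f14_HH [CharZero K] (β : K) (hβ : β ^ 2 = β - 2) (A : Fin 3 → 𝐋)
    (hA : ∀ g j, act K HH g (A j) = ∑ k, algebraMap K 𝐋 (rep β hβ g j k) * A k)
    (g : HH) :
    act K HH g (f14 (algebraMap K 𝐋 β) (A 0) (A 1) (A 2)) =
      f14 (algebraMap K 𝐋 β) (A 0) (A 1) (A 2) := by
  unfold f14
  rw [map_prod]
  simp only [qf_HH K β hβ A hA]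
  have h0 := HH_zero _ g.2
  refine Finset.prod_equiv (g : Equiv.Perm (Fin 8)) (fun i => ?_) (fun _ _ => rfl)
  simp only [Finset.mem_erase, Finset.mem_univ, and_true]
  rw [not_iff_not]
  constructor
  · rintro rfl; exact h0
  · intro h; rw [← h0] at h; exact (g : Equiv.Perm (Fin 8)).injective h

theorem F0_faith_aux [CharZero K] (X Y : 𝐋) (hi : AlgebraicIndependent K ![X, Y])
    (R : Matrix (Fin 3) (Fin 3) K)
    (hX : X * (algebraMap K 𝐋 (R 2 0) * X + algebraMap K 𝐋 (R 2 1) * Y + algebraMap K 𝐋 (R 2 2)) =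
      algebraMap K 𝐋 (R 0 0) * X + algebraMap K 𝐋 (R 0 1) * Y + algebraMap K 𝐋 (R 0 2))
    (hY : Y * (algebraMap K 𝐋 (R 2 0) * X + algebraMap K 𝐋 (R 2 1) * Y + algebraMap K 𝐋 (R 2 2)) =
      algebraMap K 𝐋 (R 1 0) * X + algebraMap K 𝐋 (R 1 1) * Y + algebraMap K 𝐋 (R 1 2)) :
    R = R 2 2 • (1 : Matrix (Fin 3) (Fin 3) K) := by
  have e1 := spec_zero K X Y hi (MvPolynomial.X 0 * (MvPolynomial.C (R 2 0) * MvPolynomial.X 0 +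
    MvPolynomial.C (R 2 1) * MvPolynomial.X 1 + MvPolynomial.C (R 2 2)) -
    (MvPolynomial.C (R 0 0) * MvPolynomial.X 0 +
    MvPolynomial.C (R 0 1) * MvPolynomial.X 1 + MvPolynomial.C (R 0 2)))
    (by simp [MvPolynomial.algHom_C]; linear_combination hX)
  have e2 := spec_zero K X Y hi (MvPolynomial.X 1 * (MvPolynomial.C (R 2 0) * MvPolynomial.X 0 +
    MvPolynomial.C (R 2 1) * MvPolynomial.X 1 + MvPolynomial.C (R 2 2)) -
    (MvPolynomial.C (R 1 0) * MvPolynomial.X 0 +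
    MvPolynomial.C (R 1 1) * MvPolynomial.X 1 + MvPolynomial.C (R 1 2)))
    (by simp [MvPolynomial.algHom_C]; linear_combination hY)
  have two : (2 : K) ≠ 0 := two_ne_zero
  have a0 := e1 ![0, 0]
  have a1 := e1 ![1, 0]
  have a2 := e1 ![-1, 0]
  have a3 := e1 ![0, 1]
  have b0 := e2 ![0, 0]
  have b1 := e2 ![0, 1]
  have b2 := e2 ![0, -1]
  have b3 := e2 ![1, 0]
  simp at a0 a1 a2 a3 b0 b1 b2 b3
  have c20 : R 2 0 = 0 := by
    apply mul_left_cancel₀ two; linear_combination a1 + a2 + 2 * a0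
  have c21 : R 2 1 = 0 := by
    apply mul_left_cancel₀ two; linear_combination b1 + b2 + 2 * b0
  have c00 : R 0 0 = R 2 2 := by linear_combination -a1 - a0 + c20
  have c11 : R 1 1 = R 2 2 := by linear_combination -b1 - b0 + c21
  have c01 : R 0 1 = 0 := by linear_combination -a3 - a0
  have c10 : R 1 0 = 0 := by linear_combination -b3 - b0
  ext i j
  fin_cases i <;> fin_cases j <;> simp [c20, c21, c00, c11, c01, c10, a0, b0]

theorem s1_ne [CharZero K] (X Y : 𝐋) (hi : AlgebraicIndependent K ![X, Y]) : s1 X Y 1 ≠ 0 := by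
  intro h
  have := spec_zero K X Y hi (s1 (MvPolynomial.X 0) (MvPolynomial.X 1) 1)
    (by rw [← h]; simp [s1]) ![0, 0]
  simp [s1] at this

theorem f4_ne [CharZero K] (β : K) (hβ : β ^ 2 = β - 2) (hβ' : (algebraMap K 𝐋 β) ^ 2 = algebraMap K 𝐋 β - 2)
    (X Y : 𝐋) (hi : AlgebraicIndependent K ![X, Y]) : f4 (algebraMap K 𝐋 β) X Y 1 ≠ 0 := by
  intro h
  rw [f4_eq _ _ _ _ hβ'] at h
  have := spec_zero K X Y hi (28 * MvPolynomial.C β * s1 (MvPolynomial.X 0) (MvPolynomial.X 1) 1 ^ 2 +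
    (168 - 140 * MvPolynomial.C β) * s2 (MvPolynomial.X 0) (MvPolynomial.X 1) 1)
    (by rw [← h]; simp [s1, s2, MvPolynomial.algHom_C]) ![0, 0]
  simp [s1, s2] at this
  subst this
  norm_num at hβ

theorem f6_ne [CharZero K] (β : K) (hβ : β ^ 2 = β - 2) (hβ' : (algebraMap K 𝐋 β) ^ 2 = algebraMap K 𝐋 β - 2)
    (X Y : 𝐋) (hi : AlgebraicIndependent K ![X, Y]) : f6 (algebraMap K 𝐋 β) X Y 1 ≠ 0 := by
  intro h
  rw [f6_eq _ _ _ _ hβ'] at h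
  have := spec_zero K X Y hi ((168 - 84 * MvPolynomial.C β) * s1 (MvPolynomial.X 0) (MvPolynomial.X 1) 1 ^ 3 +
    (-84 + 462 * MvPolynomial.C β) * s1 (MvPolynomial.X 0) (MvPolynomial.X 1) 1 * s2 (MvPolynomial.X 0) (MvPolynomial.X 1) 1
    + (-4116 - 882 * MvPolynomial.C β) * s3 (MvPolynomial.X 0) (MvPolynomial.X 1) 1)
    (by rw [← h]; simp [s1, s2, s3, MvPolynomial.algHom_C]) ![0, 0]
  simp [s1, s2, s3] at this
  have h2 : β = 2 := by
    have h84 : (84 : K) ≠ 0 := by norm_num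
    apply mul_left_cancel₀ h84; linear_combination -this
  subst h2
  norm_num at hβ

end main0


section main0
variable (K : Type) [Field K]
local notation "𝐋" => RFF K (Fin 8)

theorem main_char0 [CharZero K] (β : K) (hβ : β ^ 2 = β - 2) : IsRatExt K (fixedSub K (Fin 8) G48) := by
  classical
  obtain ⟨A, hAm, hA2, hA, hLP⟩ := exists_A K β hβ
  have hβ' : (algebraMap K 𝐋 β) ^ 2 = algebraMap K 𝐋 β - 2 := by
    rw [← map_pow, hβ, map_sub, map_ofNat]
  have hc0 : CharZero 𝐋 := charZero_of_injective_algebraMap (algebraMap K 𝐋).injective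
  have i4 := f4_HH K β hβ A hA
  have i6 := f6_HH K β hβ A hA
  have i14 := f14_HH K β hβ A hA
  set X := A 0 / A 2 with hX
  set Y := A 1 / A 2 with hY
  have eX : A 0 = A 2 * X := by rw [hX]; field_simp
  have eY : A 1 = A 2 * Y := by rw [hY]; field_simp
  have eA4 : f4 (algebraMap K 𝐋 β) (A 0) (A 1) (A 2) = A 2 ^ 4 * f4 (algebraMap K 𝐋 β) X Y 1 := by
    rw [← f4_hom, mul_one, ← eX, ← eY]
  have eA6 : f6 (algebraMap K 𝐋 β) (A 0) (A 1) (A 2) = A 2 ^ 6 * f6 (algebraMap K 𝐋 β) X Y 1 := by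
    rw [← f6_hom, mul_one, ← eX, ← eY]
  have eA14 : f14 (algebraMap K 𝐋 β) (A 0) (A 1) (A 2) = A 2 ^ 14 * f14 (algebraMap K 𝐋 β) X Y 1 := by
    rw [← f14_hom, mul_one, ← eX, ← eY]
  have hi := XY_indep K X Y hLP
  have n1 := s1_ne K X Y hi
  have n4 := f4_ne K β hβ hβ' X Y hi
  have n6 := f6_ne K β hβ hβ' X Y hi
  obtain ⟨ι, hι, hιc, hsp⟩ := tower β X Y hβ' n1 n4 n6
  set p := f6 (algebraMap K 𝐋 β) X Y 1 ^ 2 / f4 (algebraMap K 𝐋 β) X Y 1 ^ 3 with hp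
  set q := f14 (algebraMap K 𝐋 β) X Y 1 / (f4 (algebraMap K 𝐋 β) X Y 1 ^ 2 * f6 (algebraMap K 𝐋 β) X Y 1) with hq
  have ep : p = f6 (algebraMap K 𝐋 β) (A 0) (A 1) (A 2) ^ 2 / f4 (algebraMap K 𝐋 β) (A 0) (A 1) (A 2) ^ 3 := by
    rw [hp, eA4, eA6]; field_simp
  have eq : q = f14 (algebraMap K 𝐋 β) (A 0) (A 1) (A 2) /
      (f4 (algebraMap K 𝐋 β) (A 0) (A 1) (A 2) ^ 2 * f6 (algebraMap K 𝐋 β) (A 0) (A 1) (A 2)) := by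
    rw [hq, eA4, eA6, eA14]; field_simp
  have fp : ∀ g, act K HH g p = p := by
    intro g
    rw [ep, map_div₀, map_pow, map_pow, i4, i6]
  have fq : ∀ g, act K HH g q = q := by
    intro g
    rw [eq, map_div₀, map_mul, map_pow, i4, i6, i14]
  clear_value p q
  set F0 := adjoin K {X, Y} with hF0
  have mX : X ∈ F0 := subset_adjoin K _ (by simp)
  have mY : Y ∈ F0 := subset_adjoin K _ (by simp)
  have hF0LP : F0 ≤ LP K := by
    rw [hF0, adjoin_le_iff]
    rintro _ (rfl | rfl)
    · exact div_mem (hAm 0) (hAm 2)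
    · exact div_mem (hAm 1) (hAm 2)
  have hlin : ∀ g j, act K HH g (A j) = A 2 * (algebraMap K 𝐋 (rep β hβ g j 0) * X +
      algebraMap K 𝐋 (rep β hβ g j 1) * Y + algebraMap K 𝐋 (rep β hβ g j 2)) := by
    intro g j
    rw [hA, Fin.sum_univ_three, eX, eY]; ring
  have hden : ∀ g, algebraMap K 𝐋 (rep β hβ g 2 0) * X +
      algebraMap K 𝐋 (rep β hβ g 2 1) * Y + algebraMap K 𝐋 (rep β hβ g 2 2) ≠ 0 := by
    intro g h
    have := hlin g 2
    rw [h, mul_zero] at this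
    exact hA2 ((map_eq_zero_iff _ (act K HH g).injective).1 this)
  have gX : ∀ g, act K HH g X = (algebraMap K 𝐋 (rep β hβ g 0 0) * X +
      algebraMap K 𝐋 (rep β hβ g 0 1) * Y + algebraMap K 𝐋 (rep β hβ g 0 2)) /
      (algebraMap K 𝐋 (rep β hβ g 2 0) * X +
      algebraMap K 𝐋 (rep β hβ g 2 1) * Y + algebraMap K 𝐋 (rep β hβ g 2 2)) := by
    intro g
    conv_lhs => rw [hX, map_div₀, hlin, hlin]
    rw [mul_div_mul_left _ _ hA2]
  have gY : ∀ g, act K HH g Y = (algebraMap K 𝐋 (rep β hβ g 1 0) * X +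
      algebraMap K 𝐋 (rep β hβ g 1 1) * Y + algebraMap K 𝐋 (rep β hβ g 1 2)) /
      (algebraMap K 𝐋 (rep β hβ g 2 0) * X +
      algebraMap K 𝐋 (rep β hβ g 2 1) * Y + algebraMap K 𝐋 (rep β hβ g 2 2)) := by
    intro g
    conv_lhs => rw [hY, map_div₀, hlin, hlin]
    rw [mul_div_mul_left _ _ hA2]
  have mlin : ∀ g j, algebraMap K 𝐋 (rep β hβ g j 0) * X +
      algebraMap K 𝐋 (rep β hβ g j 1) * Y + algebraMap K 𝐋 (rep β hβ g j 2) ∈ F0 := fun g j =>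
    add_mem (add_mem (mul_mem (F0.algebraMap_mem _) mX) (mul_mem (F0.algebraMap_mem _) mY))
      (F0.algebraMap_mem _)
  have hs : Stab (act K HH) F0 := by
    intro g
    refine map_adjoin_mem _ _ _ ?_
    rintro t (ht | ht)
    · rw [ht, gX]
      exact div_mem (mlin g 0) (mlin g 2)
    · rw [Set.mem_singleton_iff.1 ht, gY]
      exact div_mem (mlin g 1) (mlin g 2)
  have hf : Faith (act K HH) F0 := by
    intro g hg
    have h1 := hg X mX
    have h2 := hg Y mY
    rw [gX, div_eq_iff (hden g)] at h1
    rw [gY, div_eq_iff (hden g)] at h2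
    exact rep_scalar β hβ g _ (F0_faith_aux K X Y hi _ h1.symm h2.symm)
  have hfixF0 : ∀ x ∈ F0, (∀ g, act K HH g x = x) → x ∈ adjoin K {p, q} := by
    intro x hx hfix
    refine artin (act K HH) F0 _ hs hf ?_ hsp (hιc.le.trans card_HH) x hx hfix
    intro b hb g
    refine fixed_adjoin (act K HH) {p, q} ?_ b hb g
    rintro t (rfl | rfl)
    · exact fp
    · exact fq
  have memW : ∀ b, ub K b ∈ Submodule.span F0 (Set.range fun i : Fin 7 => ub K i.succ) := by
    intro b
    refine Fin.cases ?_ (fun i => ?_) b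
    · rw [ub_zero]; exact zero_mem _
    · exact Submodule.subset_span ⟨i, rfl⟩
  obtain ⟨S, hS, hSfix, hSm, hw⟩ := exists_invariants (act K HH) F0 hs hf
    (fun i : Fin 7 => ub K i.succ) 6 (by simp) (by
      intro g i
      rw [ub_HH]; exact memW _) (by
      rw [← ub_sum K]
      exact sum_mem fun b _ => memW b)
  have hEEF : EE K ≤ F0 ⊔ adjoin K (S : Set 𝐋) := by
    unfold EE
    rw [adjoin_le_iff]
    rintro _ ⟨b, rfl⟩
    refine Fin.cases ?_ (fun i => ?_) b
    · rw [ub_zero]; exact zero_mem _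
    · exact hw i
  have hLP' : LP K ≤ F0 ⊔ adjoin K (S : Set 𝐋) := hLP.trans (sup_le le_sup_left hEEF)
  have hSLP : ∀ t ∈ S, t ∈ LP K := by
    intro t ht
    refine (sup_le hF0LP (adjoin_le_iff.2 ?_) : _ ≤ LP K) (hSm t ht)
    rintro _ ⟨i, rfl⟩
    exact EE_le K (ub_mem K _)
  have hfALP : ∀ x y z : 𝐋, x ∈ LP K → y ∈ LP K → z ∈ LP K → ∀ b, qf (algebraMap K 𝐋 β) x y z b ∈ LP K := by
    intro x y z hx hy hz b
    have h : qf (algebraMap K 𝐋 β) x y z b = ∑ i, ∑ j, ![x,y,z] i * algebraMap K 𝐋 (QQ β b i j) * ![x,y,z] j :=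
      qf_sum K β ![x,y,z] b
    have hm : ∀ i, ![x,y,z] i ∈ LP K := by
      intro i; fin_cases i
      exacts [hx, hy, hz]
    rw [h]
    exact sum_mem fun i _ => sum_mem fun j _ => mul_mem (mul_mem (hm i) ((LP K).algebraMap_mem _)) (hm j)
  have qm := hfALP _ _ _ (hAm 0) (hAm 1) (hAm 2)
  have m4 : f4 (algebraMap K 𝐋 β) (A 0) (A 1) (A 2) ∈ LP K := sum_mem fun b _ => pow_mem (qm b) 2
  have m6 : f6 (algebraMap K 𝐋 β) (A 0) (A 1) (A 2) ∈ LP K := sum_mem fun b _ => pow_mem (qm b) 3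
  have m14 : f14 (algebraMap K 𝐋 β) (A 0) (A 1) (A 2) ∈ LP K := prod_mem fun b _ => qm b
  have pLP : p ∈ LP K := by rw [ep]; exact div_mem (pow_mem m6 2) (pow_mem m4 3)
  have qLP : q ∈ LP K := by rw [eq]; exact div_mem m14 (mul_mem (pow_mem m4 2) m6)
  have hfix48 : ∀ t ∈ LP K, (∀ g, act K HH g t = t) → ∀ g, act K G48 g t = t := by
    intro t ht hfix
    apply fix_closure
    intro g hg
    have hv := LP_VV K t ht
    simp only [Set.mem_insert_iff, Set.mem_singleton_iff] at hg
    rcases hg with rfl | rfl | rfl | rfl | rfl | rfl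
    · exact hv ⟨_, pS1_mem⟩
    · exact hv ⟨_, pS2_mem⟩
    · exact hfix ⟨_, pTh_mem⟩
    · exact hv ⟨_, pK_mem⟩
    · exact hfix ⟨_, pF1_mem⟩
    · exact hfix ⟨_, pF2_mem⟩
  refine final _ ({p, q} ∪ S) ?_ ?_ (alg_fixed G48)
  · refine (Finset.card_union_le _ _).trans ?_
    have : ({p, q} : Finset 𝐋).card ≤ 2 := Finset.card_le_two
    omega
  · apply le_antisymm
    · rw [adjoin_le_iff]
      intro t ht
      change t ∈ fixedSub K (Fin 8) G48
      rw [mem_fixedSub]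
      simp only [Finset.coe_union, Set.mem_union, Finset.mem_coe, Finset.mem_insert,
        Finset.mem_singleton] at ht
      rcases ht with (rfl | rfl) | ht
      · exact hfix48 _ pLP fp
      · exact hfix48 _ qLP fq
      · exact hfix48 t (hSLP t ht) (hSfix t ht)
    · intro l hl
      rw [mem_fixedSub] at hl
      have hlLP : l ∈ LP K := VV_fixed K l fun g => hl ⟨g.1, VV_le g.2⟩
      have := noname (act K HH) F0 hs hf S hSfix l (hLP' hlLP) (fun g => hl ⟨g.1, HH_le g.2⟩)
      refine (adjoin_le_iff.2 ?_ : _ ≤ adjoin K _) this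
      rintro x (hx | hx)
      · have h1 := hfixF0 x hx.1 hx.2
        refine adjoin.mono K _ _ ?_ h1
        rintro t (rfl | rfl)
        · simp
        · simp
      · exact subset_adjoin K _ (by simp [Finset.mem_coe.1 hx])

end main0
theorem rationality_G48 (K : Type) [Field K]
    (hK : ringChar K = 2 ∨ (CharZero K ∧ ∃ r : K, r ^ 2 = -7)) :
    IsRatExt K ↥(fixedSub K (Fin 8) (Subgroup.closure
      {Equiv.swap (0 : Fin 8) 1 * Equiv.swap 2 3 * Equiv.swap 4 5 * Equiv.swap 6 7,
       Equiv.swap (0 : Fin 8) 2 * Equiv.swap 1 3 * Equiv.swap 4 6 * Equiv.swap 5 7,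
       Equiv.swap (1 : Fin 8) 2 * Equiv.swap 2 6 * Equiv.swap 6 3 * Equiv.swap 3 4 * Equiv.swap 4 5 * Equiv.swap 5 7,
       Equiv.swap (0 : Fin 8) 4 * Equiv.swap 1 5 * Equiv.swap 2 6 * Equiv.swap 3 7,
       (Equiv.swap (1 : Fin 8) 2 * Equiv.swap 2 3) * (Equiv.swap (6 : Fin 8) 5 * Equiv.swap 5 4),
       Equiv.swap (1 : Fin 8) 2 * Equiv.swap 5 6})) := by
  rcases hK with h | ⟨h0, r, hr⟩
  · haveI : CharP K 2 := ringChar.of_eq h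
    exact main_char2 K
  · refine main_char0 K ((1 + r) / 2) ?_
    field_simp
    linear_combination hr
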